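/- (Analytic non-archimedean van der Corput Lemma.) Let f ∈ K⦃x⦄ and suppose that for some k ≥ 1 one has |f^{(k)}(x)| ≥ 1 for all x ∈ O_K. Let I(y) := ∫_{O_K} ψ(y·f(t)) |dt|. Then for all y ∈ K^× one has |I(y)| ≤ c_k · |y|^{-1/k}, where the constant c_k depends only on k, q_K, and the Gauss norm ‖f − f(0)‖. Alternatively, if K has characteristic zero, c_k can be taken to depend only on k, q_K, the ramification degree ord(p_K) of K, and the SP-number of f^{(k-1)}. -/

import Mathlib

open MeasureTheory Filter
open scoped NNReal ENNReal Classical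

namespace VdC

variable {K : Type*} [NontriviallyNormedField K]

/-! ### One-variable convergent power series over a non-archimedean local field -/

/-- Evaluation of a one-variable power series (given by its coefficients) at a point. -/
noncomputable def pseval (a : ℕ → K) (x : K) : K := ∑' i, a i * x ^ i

/-- Membership in `K⦃x⦄`: the coefficients tend to `0`, i.e. convergence on `O_K`. -/
def IsConvergent (a : ℕ → K) : Prop := Tendsto (fun i => ‖a i‖) atTop (nhds 0)

/-- Gauss norm of a power series. -/
noncomputable def gaussNorm (a : ℕ → K) : ℝ := ⨆ i, ‖a i‖

/-- Coefficients of `f - f(0)`. -/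
def tail (a : ℕ → K) : ℕ → K := fun i => if i = 0 then 0 else a i

/-- SP power series: `a 1 ≠ 0` and `a j ∈ a 1 • M_K` for all `j > 1`;
`‖a 1‖` is then the SP-norm `|f|_SP`. -/
def IsSP (a : ℕ → K) : Prop := a 1 ≠ 0 ∧ ∀ j, 1 < j → ‖a j‖ < ‖a 1‖

/-- Coefficients of `f_{b,c}(t) = (1/c) ⬝ f (b + c t)`. -/
noncomputable def shiftCoeff (a : ℕ → K) (b c : K) : ℕ → K :=
  fun j => c⁻¹ * c ^ j * ∑' m : ℕ, ((m + j).choose j : K) * a (m + j) * b ^ m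

/-- `SPAt q a r` says: for all nonzero `c ∈ M_K ^ r` and all `b ∈ O_K`, the power series
`f_{b,c}` is SP.  (Here `c ∈ M_K ^ r` iff `‖c‖ ≤ q⁻¹ ^ r`.)  The SP-number of `f` is the
least `r` with this property, i.e. `IsLeast {r | SPAt q a r} r`. -/
def SPAt (q : ℕ) (a : ℕ → K) (r : ℕ) : Prop :=
  ∀ b c : K, ‖b‖ ≤ 1 → c ≠ 0 → ‖c‖ ≤ (q : ℝ)⁻¹ ^ r → IsSP (shiftCoeff a b c)

/-- Coefficients of the derivative of a power series; `dcoeff^[k] a` gives `f^{(k)}`. -/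
def dcoeff (a : ℕ → K) : ℕ → K := fun j => ((j + 1 : ℕ) : K) * a (j + 1)

/-- `K` is a non-archimedean local field whose residue field has `q` elements, the norm
being normalized so that a uniformizer `π_K` has norm `q⁻¹`. -/
structure IsLocalField (K : Type*) [NontriviallyNormedField K] (q : ℕ) : Prop where
  nonarch : IsNonarchimedean (norm : K → ℝ)
  one_lt : 1 < q
  complete : CompleteSpace K
  exists_unif : ∃ π : K, ‖π‖ = (q : ℝ)⁻¹
  discrete : ∀ x : K, x ≠ 0 → ∃ m : ℤ, ‖x‖ = (q : ℝ) ^ m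
  residue : ∃ T : Finset K, T.card = q ∧ (∀ t ∈ T, ‖t‖ ≤ 1) ∧
      ∀ x : K, ‖x‖ ≤ 1 → ∃! t, t ∈ T ∧ ‖x - t‖ < 1

/-- `ψ` is an additive character on `K`, trivial on `M_K` and nontrivial on `O_K`. -/
structure IsAddChar (ψ : K → ℂ) : Prop where
  cont : Continuous ψ
  map_add : ∀ x y, ψ (x + y) = ψ x * ψ y
  norm_eq : ∀ x, ‖ψ x‖ = 1
  triv : ∀ x : K, ‖x‖ < 1 → ψ x = 1
  nontriv : ∃ x : K, ‖x‖ ≤ 1 ∧ ψ x ≠ 1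

/-- The characteristic of `K` is zero or larger than `k`. -/
def CharCond (K : Type*) [NontriviallyNormedField K] (k : ℕ) : Prop :=
  ∀ m : ℕ, m ≤ k → (m : K) = 0 → m = 0

/-- `p` is the residue characteristic of `K` (so `q = p ^ f` is the residue cardinality)
and `e = ord (p_K)` is the ramification degree of `K`, i.e. `‖p‖ = q ^ (-e)`. -/
def IsResidueData (K : Type*) [NontriviallyNormedField K] (q p e : ℕ) : Prop :=
  p.Prime ∧ (∃ f : ℕ, 0 < f ∧ q = p ^ f) ∧ 0 < e ∧ ‖(p : K)‖ = (q : ℝ)⁻¹ ^ e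

/-- `f` is (Weierstrass) regular of degree `d`: it lies in `O_K⦃x⦄` and is congruent to
a monic polynomial of degree `d` modulo `π_K ⬝ O_K⦃x⦄`. -/
def IsRegularOfDeg (a : ℕ → K) (d : ℕ) : Prop :=
  (∀ i, ‖a i‖ ≤ 1) ∧ ‖a d - 1‖ < 1 ∧ ∀ i, d < i → ‖a i‖ < 1

/-! ### Several variables -/

/-- Evaluation of a power series in `n` variables at a point. -/
noncomputable def mpseval {n : ℕ} (a : (Fin n → ℕ) → K) (x : Fin n → K) : K :=
  ∑' i : Fin n → ℕ, a i * ∏ j, x j ^ i j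

/-- Membership in `K⦃x_1,…,x_n⦄`: `‖a i‖ → 0` as `|i| → ∞`. -/
def MIsConvergent {n : ℕ} (a : (Fin n → ℕ) → K) : Prop :=
  Tendsto (fun i => ‖a i‖) cofinite (nhds 0)

/-- Gauss norm of a multivariate power series. -/
noncomputable def mgauss {n : ℕ} (a : (Fin n → ℕ) → K) : ℝ := ⨆ i, ‖a i‖

/-- Coefficients of `f - f(0)`. -/
def mtail {n : ℕ} (a : (Fin n → ℕ) → K) : (Fin n → ℕ) → K :=
  fun i => if i = 0 then 0 else a i

/-- Coefficients of the partial derivative `∂^α f` of a multivariate power series `f`. -/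
noncomputable def mpderiv {n : ℕ} (a : (Fin n → ℕ) → K) (α : Fin n → ℕ) :
    (Fin n → ℕ) → K :=
  fun i => ((∏ j, (i j + α j).descFactorial (α j) : ℕ) : K) * a (fun j => i j + α j)

/-- The unit polydisc `O_K ^ n`. -/
def polydisc (K : Type*) [NontriviallyNormedField K] (n : ℕ) : Set (Fin n → K) :=
  {x | ∀ i, ‖x i‖ ≤ 1}

/-! ### `K`-analytic manifolds with isometric charts, type conditions, induced measures -/

/-- An isometric analytic chart of the `d`-dimensional manifold `M ⊆ K^n` centered at
`x0 ∈ M`: `ι` selects the `d` coordinates of the coordinate projection `p : x ↦ x ∘ ι`,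
and the inverse of `p` is given by the `n` convergent power series `F i`, parametrizing
`M ∩ {x : ‖x - x0‖ ≤ ‖c‖}` isometrically by the polydisc `x0 + (c O_K)^d`. -/
def IsChartAt {n : ℕ} (d : ℕ) (M : Set (Fin n → K)) (x0 : Fin n → K)
    (ι : Fin d → Fin n) (c : K) (F : Fin n → (Fin d → ℕ) → K) : Prop :=
  Function.Injective ι ∧ c ≠ 0 ∧ (∀ i, MIsConvergent (F i)) ∧
  (∀ i, mpseval (F i) 0 = x0 i) ∧
  (∀ z : Fin d → K, z ∈ polydisc K d → ∀ j, mpseval (F (ι j)) z = x0 (ι j) + c * z j) ∧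
  (∀ z z' : Fin d → K, z ∈ polydisc K d → z' ∈ polydisc K d →
      ∀ i, ‖mpseval (F i) z - mpseval (F i) z'‖ ≤ ‖c‖ * (⨆ j, ‖z j - z' j‖)) ∧
  ((fun z : Fin d → K => fun i => mpseval (F i) z) '' polydisc K d
      = M ∩ {x | ∀ i, ‖x i - x0 i‖ ≤ ‖c‖})

/-- `M ⊆ K^n` is a `d`-dimensional `K`-analytic manifold (with isometric charts). -/
def IsManifold {n : ℕ} (d : ℕ) (M : Set (Fin n → K)) : Prop :=
  ∀ x0 ∈ M, ∃ ι c F, IsChartAt d M x0 ι c F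

/-- `M` is of type at most `k` at the point `x0`: for some analytic chart `f = (F i)_i`
centered at `x0` and each nonzero `v ∈ K^n` there is a multi-index `α` with
`0 < |α| ≤ k` and `v ⬝ (∂^α f)(x0) ≠ 0`. -/
def TypeAtMost {n : ℕ} (d : ℕ) (M : Set (Fin n → K)) (x0 : Fin n → K) (k : ℕ) : Prop :=
  ∃ ι c F, IsChartAt d M x0 ι c F ∧
    ∀ v : Fin n → K, v ≠ 0 → ∃ α : Fin d → ℕ, 0 < (∑ j, α j) ∧ (∑ j, α j) ≤ k ∧
      (∑ i, v i * mpseval (mpderiv (F i) α) 0) ≠ 0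

/-- `M` is of type `k`: of type at most `k` at each of its points, `k` least such. -/
def IsOfType {n : ℕ} (d : ℕ) (M : Set (Fin n → K)) (k : ℕ) : Prop :=
  0 < k ∧ (∀ x ∈ M, TypeAtMost d M x k) ∧
    ∀ k', (∀ x ∈ M, TypeAtMost d M x k') → k ≤ k'

/-- `μS` is the measure on the manifold `S ⊆ K^n` induced, via the isometric charts
of `S` (namely the coordinate projections `x ↦ x ∘ ι`), from the Haar measure `lamd` on
`K^d` normalized so that `O_K^d` has measure `1`. -/
def IsInducedMeasure [MeasurableSpace K] {n : ℕ} (d : ℕ) (S : Set (Fin n → K))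
    (μS : Measure (Fin n → K)) (lamd : Measure (Fin d → K)) : Prop :=
  μS {x | x ∉ S} = 0 ∧
  ∀ x0 ∈ S, ∀ ι c F, IsChartAt d S x0 ι c F →
    ∀ A : Set (Fin n → K), MeasurableSet A → A ⊆ S ∩ {x | ∀ i, ‖x i - x0 i‖ ≤ ‖c‖} →
      μS A = lamd ((fun x : Fin n → K => x ∘ ι) '' A)

/-! ### Maximal function and Riesz kernel on `K^n` -/

/-- The Hardy–Littlewood maximal function on `K^n`, where the balls are the sets
`a + b ⬝ O_K^n` with `b ≠ 0`. -/
noncomputable def maximalFn [MeasurableSpace K] {n : ℕ} (μ : Measure (Fin n → K))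
    (f : (Fin n → K) → ℂ) (x : Fin n → K) : ℝ :=
  sSup {r : ℝ | ∃ (a : Fin n → K) (b : K), b ≠ 0 ∧ (∀ i, ‖x i - a i‖ ≤ ‖b‖) ∧
    r = (μ {y | ∀ i, ‖y i - a i‖ ≤ ‖b‖}).toReal⁻¹ *
      ∫ y in {y : Fin n → K | ∀ i, ‖y i - a i‖ ≤ ‖b‖}, ‖f y‖ ∂μ}

/-- The kernel `y ↦ |y|^{-γ}` on `K^n`, extended by `0` at `0`. -/
noncomputable def rieszKernel {n : ℕ} (γ : ℝ) (y : Fin n → K) : ℂ :=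
  if y = 0 then 0 else ((‖y‖ ^ (-γ) : ℝ) : ℂ)

end VdC

namespace VdCProof

open Polynomial VdC

variable {K : Type*} [NontriviallyNormedField K]

/-- Working data of a local field: uniformizer and residue representatives. -/
structure LF (K : Type*) [NontriviallyNormedField K] (q : ℕ) (ϖ : K) (T : Finset K) : Prop where
  ultra : IsUltrametricDist K
  one_lt : 1 < q
  unif : ‖ϖ‖ = (q : ℝ)⁻¹
  discrete : ∀ x : K, x ≠ 0 → ∃ m : ℤ, ‖x‖ = (q : ℝ) ^ m
  card : T.card = q
  le_one : ∀ t ∈ T, ‖t‖ ≤ 1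
  rep : ∀ x : K, ‖x‖ ≤ 1 → ∃! t, t ∈ T ∧ ‖x - t‖ < 1

section basic
variable {q : ℕ} {ϖ : K} {T : Finset K} (h : LF K q ϖ T)
include h

lemma LF.qpos : (0 : ℝ) < q := by have := h.one_lt; positivity

lemma LF.q1 : (1 : ℝ) < q := by exact_mod_cast h.one_lt

lemma LF.unif_lt : ‖ϖ‖ < 1 := by
  rw [h.unif]; exact inv_lt_one_of_one_lt₀ h.q1

lemma LF.unif_ne : ϖ ≠ 0 := by
  rw [← norm_pos_iff, h.unif]; exact inv_pos.2 h.qpos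

lemma LF.add_le {x y : K} {C : ℝ} (hx : ‖x‖ ≤ C) (hy : ‖y‖ ≤ C) : ‖x + y‖ ≤ C := by
  have := h.ultra
  exact (IsUltrametricDist.norm_add_le_max x y).trans (max_le hx hy)

lemma LF.add_lt {x y : K} {C : ℝ} (hx : ‖x‖ < C) (hy : ‖y‖ < C) : ‖x + y‖ < C := by
  have := h.ultra
  exact (IsUltrametricDist.norm_add_le_max x y).trans_lt (max_lt hx hy)

lemma LF.sub_le {x y : K} {C : ℝ} (hx : ‖x‖ ≤ C) (hy : ‖y‖ ≤ C) : ‖x - y‖ ≤ C := by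
  rw [sub_eq_add_neg]; exact h.add_le hx (by rwa [norm_neg])

lemma LF.sub_lt {x y : K} {C : ℝ} (hx : ‖x‖ < C) (hy : ‖y‖ < C) : ‖x - y‖ < C := by
  rw [sub_eq_add_neg]; exact h.add_lt hx (by rwa [norm_neg])

lemma LF.norm_eq_of_sub_lt {x y : K} (hxy : ‖x - y‖ < ‖y‖) : ‖x‖ = ‖y‖ := by
  apply le_antisymm
  · have := h.add_le hxy.le (le_refl ‖y‖)
    simpa using this
  · by_contra hc
    push Not at hc
    have : ‖x - (x - y)‖ < ‖y‖ := h.sub_lt hc hxy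
    simp at this

lemma LF.sum_le {ι : Type*} (s : Finset ι) (f : ι → K) {C : ℝ} (hC : 0 ≤ C)
    (hf : ∀ i ∈ s, ‖f i‖ ≤ C) : ‖∑ i ∈ s, f i‖ ≤ C := by
  have := h.ultra
  exact IsUltrametricDist.norm_sum_le_of_forall_le_of_nonneg hC hf

lemma LF.nat_le (n : ℕ) : ‖(n : K)‖ ≤ 1 := by
  have := h.ultra
  exact IsUltrametricDist.norm_natCast_le_one K n

/-- an element of norm less than one is divisible by the uniformizer -/
lemma LF.exists_div {z : K} (hz : ‖z‖ < 1) : ∃ w : K, ‖w‖ ≤ 1 ∧ z = ϖ * w := by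
  refine ⟨z / ϖ, ?_, by field_simp [h.unif_ne]⟩
  by_cases h0 : z = 0
  · simp [h0]
  obtain ⟨m, hm⟩ := h.discrete z h0
  rw [norm_div, hm, h.unif]
  rw [hm] at hz
  have hm0 : m < 0 := by
    by_contra hc
    push Not at hc
    have := one_le_zpow₀ h.q1.le hc
    linarith
  have : (q : ℝ) ^ m ≤ (q : ℝ) ^ (-1 : ℤ) := zpow_le_zpow_right₀ h.q1.le (by omega)
  rw [zpow_neg_one] at this
  exact div_le_one_of_le₀ this (inv_pos.2 h.qpos).le

lemma LF.mul_add_le {b x : K} (hb : ‖b‖ ≤ 1) {c : K} (hc : ‖c‖ ≤ 1) (hx : ‖x‖ ≤ 1) :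
    ‖b + c * x‖ ≤ 1 := by
  refine h.add_le hb ?_
  rw [norm_mul]
  exact mul_le_one₀ hc (norm_nonneg _) hx

/-- permutation of representatives induced by translation -/
lemma LF.exists_perm {x : K} (hx : ‖x‖ ≤ 1) : ∃ σ : K → K, (∀ t ∈ T, σ t ∈ T) ∧
    (∀ t ∈ T, ‖t + x - σ t‖ < 1) ∧ ∀ G : K → ℂ, ∑ t ∈ T, G (σ t) = ∑ t ∈ T, G t := by
  have hex : ∀ t : K, ∃ s : K, t ∈ T → s ∈ T ∧ ‖t + x - s‖ < 1 := by
    intro t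
    by_cases ht : t ∈ T
    · obtain ⟨s, hs, -⟩ := h.rep (t + x) (h.add_le (h.le_one t ht) hx)
      exact ⟨s, fun _ => hs⟩
    · exact ⟨0, fun h => absurd h ht⟩
  choose σ hσ using hex
  have hinj : Set.InjOn σ T := by
    intro t ht t' ht' he
    have h1 := (hσ t ht).2
    have h2 := (hσ t' ht').2
    rw [he] at h1
    have h3 := h.sub_lt h1 h2
    have e : t + x - σ t' - (t' + x - σ t') = t - t' := by ring
    rw [e] at h3
    obtain ⟨s, hs, hu⟩ := h.rep t (h.le_one t ht)
    rw [hu t ⟨ht, by simp⟩, hu t' ⟨ht', h3⟩]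
  refine ⟨σ, fun t ht => (hσ t ht).1, fun t ht => (hσ t ht).2, fun G => ?_⟩
  have him : T.image σ = T := by
    apply Finset.eq_of_subset_of_card_le
    · intro s hs
      obtain ⟨t, ht, rfl⟩ := Finset.mem_image.1 hs
      exact (hσ t ht).1
    · rw [Finset.card_image_of_injOn hinj]
  conv_rhs => rw [← him]
  rw [Finset.sum_image hinj]

end basic

/-- averages over representatives of `O / ϖ ^ n` -/
noncomputable def Av (q : ℕ) (ϖ : K) (T : Finset K) : ℕ → (K → ℂ) → ℂ
  | 0, F => F 0
  | n + 1, F => (q : ℂ)⁻¹ * ∑ t ∈ T, Av q ϖ T n (fun x => F (t + ϖ * x))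

section avg
variable {q : ℕ} {ϖ : K} {T : Finset K} (h : LF K q ϖ T)
include h

lemma LF.av_congr (n : ℕ) : ∀ F G : K → ℂ, (∀ x, ‖x‖ ≤ 1 → F x = G x) →
    Av q ϖ T n F = Av q ϖ T n G := by
  induction n with
  | zero => intro F G hFG; exact hFG 0 (by simp)
  | succ n ih =>
    intro F G hFG
    simp only [Av]
    congr 1
    refine Finset.sum_congr rfl fun t ht => ih _ _ fun x hx => hFG _ ?_
    exact h.mul_add_le (h.le_one t ht) h.unif_lt.le hx

lemma LF.av_step {n : ℕ} {F : K → ℂ} (C : K → ℝ)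
    (hF : ∀ t ∈ T, ‖Av q ϖ T n (fun x => F (t + ϖ * x))‖ ≤ C t) :
    ‖Av q ϖ T (n + 1) F‖ ≤ (q : ℝ)⁻¹ * ∑ t ∈ T, C t := by
  simp only [Av]
  rw [norm_mul, norm_inv, Complex.norm_natCast]
  refine mul_le_mul_of_nonneg_left ?_ (inv_nonneg.2 h.qpos.le)
  exact (norm_sum_le _ _).trans (Finset.sum_le_sum hF)

/-- eventual bound -/
lemma LF.ev_step {F : K → ℂ} (C : K → ℝ)
    (hF : ∀ t ∈ T, ∀ᶠ n in atTop, ‖Av q ϖ T n (fun x => F (t + ϖ * x))‖ ≤ C t) :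
    ∀ᶠ n in atTop, ‖Av q ϖ T n F‖ ≤ (q : ℝ)⁻¹ * ∑ t ∈ T, C t := by
  have h1 : ∀ᶠ n in atTop, ∀ t ∈ T, ‖Av q ϖ T n (fun x => F (t + ϖ * x))‖ ≤ C t :=
    (Filter.eventually_all_finset T).2 hF
  obtain ⟨N, hN⟩ := Filter.eventually_atTop.1 h1
  refine Filter.eventually_atTop.2 ⟨N + 1, fun n hn => ?_⟩
  obtain ⟨m, rfl⟩ : ∃ m, n = m + 1 := ⟨n - 1, by omega⟩
  exact h.av_step C (hN m (by omega))

lemma LF.ev_const {F : K → ℂ} (C : ℝ)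
    (hF : ∀ t ∈ T, ∀ᶠ n in atTop, ‖Av q ϖ T n (fun x => F (t + ϖ * x))‖ ≤ C) :
    ∀ᶠ n in atTop, ‖Av q ϖ T n F‖ ≤ C := by
  have := h.ev_step (fun _ => C) hF
  have hq := h.qpos
  rw [Finset.sum_const, h.card, nsmul_eq_mul, ← mul_assoc, inv_mul_cancel₀ hq.ne', one_mul] at this
  exact this

lemma LF.ev_one (n : ℕ) : ∀ F : K → ℂ, (∀ x, ‖F x‖ ≤ 1) → ‖Av q ϖ T n F‖ ≤ 1 := by
  induction n with
  | zero => intro F hF; exact hF 0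
  | succ n ih =>
    intro F hF
    have := h.av_step (n := n) (F := F) (fun _ => 1) fun t ht => ih _ fun x => hF _
    have hq := h.qpos
    simpa [h.card, hq.ne'] using this

lemma LF.ev_level (n : ℕ) (C : ℝ) : ∀ F : K → ℂ,
    (∀ b, ‖b‖ ≤ 1 → ∀ᶠ m in atTop, ‖Av q ϖ T m (fun x => F (b + ϖ ^ n * x))‖ ≤ C) →
    ∀ᶠ m in atTop, ‖Av q ϖ T m F‖ ≤ C := by
  induction n with
  | zero => intro F hF; simpa using hF 0 (by simp)
  | succ n ih =>
    intro F hF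
    refine h.ev_const C fun t ht => ih _ fun b hb => ?_
    have := hF (t + ϖ * b) (h.mul_add_le (h.le_one t ht) h.unif_lt.le hb)
    convert this using 7
    ring

/-- translation invariance of averages -/
lemma LF.av_trans (n : ℕ) : ∀ F : K → ℂ,
    (∀ x y, ‖x‖ ≤ 1 → ‖y‖ ≤ 1 → ‖x - y‖ ≤ ‖ϖ‖ ^ n → F x = F y) →
    ∀ x, ‖x‖ ≤ 1 → Av q ϖ T n (fun z => F (z + x)) = Av q ϖ T n F := by
  induction n with
  | zero =>
    intro F hF x hx
    simp only [Av]
    exact hF _ _ (by simpa using hx) (by simp) (by simpa using hx)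
  | succ n ih =>
    intro F hF x hx
    simp only [Av]
    congr 1
    obtain ⟨σ, hσT, hσ, hsum⟩ := h.exists_perm hx
    rw [← hsum (fun t => Av q ϖ T n (fun x => F (t + ϖ * x)))]
    refine Finset.sum_congr rfl fun t ht => ?_
    obtain ⟨w, hw, hwe⟩ := h.exists_div (hσ t ht)
    rw [← ih (fun x => F (σ t + ϖ * x)) ?_ w hw]
    · congr 1
      ext z
      congr 1
      linear_combination hwe
    · intro a b ha hb hab
      apply hF
      · exact h.mul_add_le (h.le_one _ (hσT t ht)) h.unif_lt.le ha
      · exact h.mul_add_le (h.le_one _ (hσT t ht)) h.unif_lt.le hb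
      · have : σ t + ϖ * a - (σ t + ϖ * b) = ϖ * (a - b) := by ring
        rw [this, norm_mul, pow_succ']
        exact mul_le_mul_of_nonneg_left hab (norm_nonneg _)

end avg

section char
variable {q : ℕ} {ϖ : K} {T : Finset K} (h : LF K q ϖ T) {ψ : K → ℂ} (hψ : IsAddChar ψ)

include hψ in
lemma psi_congr {x y : K} (hxy : ‖x - y‖ < 1) : ψ x = ψ y := by
  have : x = y + (x - y) := by ring
  rw [this, hψ.map_add, hψ.triv _ hxy, mul_one]

include h hψ in
lemma psi_sum {u : K} (hu : ‖u‖ = 1) : ∑ t ∈ T, ψ (u * t) = 0 := by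
  obtain ⟨x0, hx0, hne⟩ := hψ.nontriv
  have hu0 : u ≠ 0 := by rw [← norm_pos_iff, hu]; norm_num
  obtain ⟨σ, hσT, hσ, hsum⟩ := h.exists_perm (x := x0 / u) (by rw [norm_div, hu, div_one]; exact hx0)
  have h1 := hsum (fun t => ψ (u * t))
  have h2 : ∀ t ∈ T, ψ (u * σ t) = ψ (u * t) * ψ x0 := by
    intro t ht
    rw [← hψ.map_add]
    symm
    apply psi_congr hψ
    have : u * t + x0 - u * σ t = u * (t + x0 / u - σ t) := by field_simp
    rw [this, norm_mul, hu, one_mul]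
    exact hσ t ht
  rw [Finset.sum_congr rfl h2, ← Finset.sum_mul] at h1
  by_contra hc
  apply hne
  exact mul_left_cancel₀ hc (by rw [h1, mul_one])

end char

/-- substitution `φ (b + c X)` -/
noncomputable def sb (φ : K[X]) (b c : K) : K[X] := φ.comp (C b + C c * X)

lemma sb_coeff (φ : K[X]) (b c : K) (j : ℕ) :
    (sb φ b c).coeff j = c ^ j * (taylor b φ).coeff j := by
  have : sb φ b c = (taylor b φ).comp (C c * X) := by
    rw [sb, taylor_apply, comp_assoc]
    congr 1
    simp [add_comm]
  rw [this, comp_C_mul_X_coeff, mul_comm]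

lemma sb_eval (φ : K[X]) (b c x : K) : (sb φ b c).eval x = φ.eval (b + c * x) := by
  simp [sb, eval_comp]

lemma sb_sb (φ : K[X]) (b c b' c' : K) : sb (sb φ b c) b' c' = sb φ (b + c * b') (c * c') := by
  simp only [sb, comp_assoc]
  congr 1
  simp
  ring

lemma sb_deriv (φ : K[X]) (b c : K) : derivative (sb φ b c) = C c * sb (derivative φ) b c := by
  simp [sb, derivative_comp]

lemma sb_Cmul (φ : K[X]) (u b c : K) : sb (C u * φ) b c = C u * sb φ b c := by
  simp [sb]

section poly
variable {q : ℕ} {ϖ : K} {T : Finset K} (h : LF K q ϖ T)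
include h

lemma LF.sum_lt {ι : Type*} (s : Finset ι) (f : ι → K) {C : ℝ} (hC : 0 < C)
    (hf : ∀ i ∈ s, ‖f i‖ < C) : ‖∑ i ∈ s, f i‖ < C := by
  induction s using Finset.induction_on with
  | empty => simpa
  | insert a s ha ih =>
    rw [Finset.sum_insert ha]
    exact h.add_lt (hf a (by simp)) (ih fun i hi => hf i (by simp [hi]))

lemma LF.eval_lt (G : K[X]) {C : ℝ} (hC : 0 < C) (hG : ∀ j, ‖G.coeff j‖ < C) {b : K}
    (hb : ‖b‖ ≤ 1) : ‖G.eval b‖ < C := by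
  rw [eval_eq_sum_range]
  refine h.sum_lt _ _ hC fun i _ => ?_
  rw [norm_mul, norm_pow]
  exact (mul_le_of_le_one_right (norm_nonneg _) (pow_le_one₀ (norm_nonneg _) hb)).trans_lt (hG i)

lemma LF.eval_le (G : K[X]) {C : ℝ} (hC : 0 ≤ C) (hG : ∀ j, ‖G.coeff j‖ ≤ C) {b : K}
    (hb : ‖b‖ ≤ 1) : ‖G.eval b‖ ≤ C := by
  rw [eval_eq_sum_range]
  refine h.sum_le _ _ hC fun i _ => ?_
  rw [norm_mul, norm_pow]
  exact (mul_le_of_le_one_right (norm_nonneg _) (pow_le_one₀ (norm_nonneg _) hb)).trans (hG i)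

lemma LF.nat_mul_le (n : ℕ) (x : K) : ‖(n : K) * x‖ ≤ ‖x‖ := by
  rw [norm_mul]
  exact mul_le_of_le_one_left (norm_nonneg _) (h.nat_le n)

lemma LF.taylor_lt (G : K[X]) {C : ℝ} (hC : 0 < C) (l : ℕ) (hG : ∀ j, l ≤ j → ‖G.coeff j‖ < C)
    {b : K} (hb : ‖b‖ ≤ 1) (j : ℕ) (hj : l ≤ j) : ‖(taylor b G).coeff j‖ < C := by
  rw [taylor_coeff]
  refine h.eval_lt _ hC (fun i => ?_) hb
  rw [hasseDeriv_coeff]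
  exact (h.nat_mul_le _ _).trans_lt (hG _ (by omega))

lemma LF.taylor_le (G : K[X]) {C : ℝ} (hC : 0 ≤ C) (l : ℕ) (hG : ∀ j, l ≤ j → ‖G.coeff j‖ ≤ C)
    {b : K} (hb : ‖b‖ ≤ 1) (j : ℕ) (hj : l ≤ j) : ‖(taylor b G).coeff j‖ ≤ C := by
  rw [taylor_coeff]
  refine h.eval_le _ hC (fun i => ?_) hb
  rw [hasseDeriv_coeff]
  exact (h.nat_mul_le _ _).trans (hG _ (by omega))

lemma LF.eval_sub_lt (G : K[X]) {B : ℝ} (hB : 0 < B) (hG : ∀ j, 1 ≤ j → ‖G.coeff j‖ < B) {b : K}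
    (hb : ‖b‖ ≤ 1) : ‖G.eval b - G.coeff 0‖ < B := by
  have := h.eval_lt (G - C (G.coeff 0)) hB (fun j => ?_) hb
  · simpa using this
  · rcases j with _ | j
    · simpa using hB
    · simpa [coeff_C] using hG (j + 1) (by omega)

lemma LF.av_const (n : ℕ) (u : ℂ) : Av q ϖ T n (fun _ => u) = u := by
  induction n with
  | zero => rfl
  | succ n ih =>
    have hq : (q : ℂ) ≠ 0 := by exact_mod_cast h.qpos.ne'
    simp only [Av, ih, Finset.sum_const, h.card, nsmul_eq_mul]
    field_simp

/-- SP polynomials have vanishing oscillatory averages -/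
lemma LF.sp_zero {ψ : K → ℂ} (hψ : IsAddChar ψ) (l : ℕ) : ∀ φ : K[X], ‖φ.coeff 1‖ = (q : ℝ) ^ l →
    (∀ j, 2 ≤ j → ‖φ.coeff j‖ < ‖φ.coeff 1‖) →
    ∀ᶠ n in atTop, ‖Av q ϖ T n (fun x => ψ (φ.eval x))‖ ≤ 0 := by
  induction l with
  | zero =>
    intro φ h1 h2
    rw [pow_zero] at h1
    have key : ∀ z : K, ‖z‖ ≤ 1 → ψ (φ.eval z) = ψ (φ.coeff 0) * ψ (φ.coeff 1 * z) := by
      intro z hz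
      rw [← hψ.map_add]
      apply psi_congr hψ
      have := h.eval_lt (φ - C (φ.coeff 0) - C (φ.coeff 1) * X) one_pos (fun j => ?_) hz
      · simpa [sub_sub] using this
      · rcases j with _ | _ | j
        · simp
        · simp [coeff_C]
        · have := h2 (j + 2) (by omega)
          rw [h1] at this
          simpa [coeff_C, coeff_X] using this
    refine Filter.eventually_atTop.2 ⟨1, fun n hn => ?_⟩
    obtain ⟨m, rfl⟩ : ∃ m, n = m + 1 := ⟨n - 1, by omega⟩
    simp only [Av]
    have : ∀ t ∈ T, Av q ϖ T m (fun x => ψ (φ.eval (t + ϖ * x)))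
        = ψ (φ.coeff 0) * ψ (φ.coeff 1 * t) := by
      intro t ht
      rw [← h.av_const m (ψ (φ.coeff 0) * ψ (φ.coeff 1 * t))]
      refine h.av_congr m _ _ fun x hx => ?_
      rw [key _ (h.mul_add_le (h.le_one t ht) h.unif_lt.le hx)]
      congr 1
      apply psi_congr hψ
      have : φ.coeff 1 * (t + ϖ * x) - φ.coeff 1 * t = φ.coeff 1 * (ϖ * x) := by ring
      rw [this, norm_mul, h1, one_mul, norm_mul]
      exact (mul_le_of_le_one_right (norm_nonneg _) hx).trans_lt h.unif_lt
    rw [Finset.sum_congr rfl this, ← Finset.mul_sum, psi_sum h hψ h1]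
    simp
  | succ l ih =>
    intro φ h1 h2
    refine h.ev_const 0 fun t ht => ?_
    have hq := h.qpos
    have hpos : 0 < ‖φ.coeff 1‖ := by rw [h1]; positivity
    have ht1 := h.le_one t ht
    have e1 : ‖(taylor t φ).coeff 1‖ = ‖φ.coeff 1‖ := by
      apply h.norm_eq_of_sub_lt
      rw [taylor_coeff_one]
      have := h.eval_sub_lt (derivative φ) hpos (fun j hj => ?_) ht1
      · simpa [coeff_derivative] using this
      · rw [coeff_derivative, mul_comm]
        have := (h.nat_mul_le (j + 1) (φ.coeff (j + 1))).trans_lt (h2 (j + 1) (by omega))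
        simpa using this
    have e2 : ‖(sb φ t ϖ).coeff 1‖ = (q : ℝ) ^ l := by
      rw [sb_coeff, norm_mul, e1, h1, pow_one, h.unif, pow_succ]
      field_simp
    have := ih (sb φ t ϖ) e2 (fun j hj => ?_)
    · simpa only [sb_eval] using this
    · rw [sb_coeff, sb_coeff, norm_mul, norm_mul, e1, norm_pow, pow_one]
      have h3 := h.taylor_lt φ hpos 2 h2 ht1 j hj
      have h4 : ‖ϖ‖ ^ j ≤ ‖ϖ‖ := by
        simpa using pow_le_pow_of_le_one (norm_nonneg ϖ) h.unif_lt.le (show 1 ≤ j by omega)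
      have h5 : 0 < ‖ϖ‖ := norm_pos_iff.2 h.unif_ne
      calc ‖ϖ‖ ^ j * ‖(taylor t φ).coeff j‖ ≤ ‖ϖ‖ * ‖(taylor t φ).coeff j‖ := by gcongr
        _ < _ := by gcongr

/-- good polynomials have vanishing oscillatory averages -/
lemma LF.good_zero {ψ : K → ℂ} (hψ : IsAddChar ψ) (s : ℕ) : ∀ φ : K[X],
    (q : ℝ) ^ s ≤ ‖φ.coeff 1‖ →
    (∀ j, 1 ≤ j → ‖(derivative φ).coeff j‖ < ‖φ.coeff 1‖) →
    (∀ j, 2 ≤ j → ‖φ.coeff j‖ < (q : ℝ) ^ s * ‖φ.coeff 1‖) →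
    ∀ᶠ n in atTop, ‖Av q ϖ T n (fun x => ψ (φ.eval x))‖ ≤ 0 := by
  induction s with
  | zero =>
    intro φ h0 h1 h2
    rw [pow_zero] at h0
    obtain ⟨m, hm⟩ := h.discrete (φ.coeff 1) (by rw [← norm_pos_iff]; linarith)
    have hm0 : 0 ≤ m := by
      by_contra hc
      push Not at hc
      have := zpow_lt_one_of_neg₀ h.q1 hc
      rw [hm] at h0
      linarith
    obtain ⟨l, rfl⟩ := Int.eq_ofNat_of_zero_le hm0
    exact h.sp_zero hψ l φ (by simpa using hm) (by simpa using h2)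
  | succ s ih =>
    intro φ h0 h1 h2
    refine h.ev_const 0 fun t ht => ?_
    have hq := h.qpos
    have hpos : 0 < ‖φ.coeff 1‖ := lt_of_lt_of_le (by positivity) h0
    have ht1 := h.le_one t ht
    have h5 : 0 < ‖ϖ‖ := norm_pos_iff.2 h.unif_ne
    have e1 : ‖(taylor t φ).coeff 1‖ = ‖φ.coeff 1‖ := by
      apply h.norm_eq_of_sub_lt
      rw [taylor_coeff_one]
      have := h.eval_sub_lt (derivative φ) hpos h1 ht1
      simpa [coeff_derivative] using this
    have e2 : ‖(sb φ t ϖ).coeff 1‖ = (q : ℝ)⁻¹ * ‖φ.coeff 1‖ := by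
      rw [sb_coeff, norm_mul, e1, pow_one, h.unif]
    have := ih (sb φ t ϖ) ?_ ?_ ?_
    · simpa only [sb_eval] using this
    · rw [e2]
      rw [pow_succ] at h0
      rw [le_inv_mul_iff₀ hq]
      linarith
    · intro j hj
      rw [e2, sb_deriv, coeff_C_mul, sb_coeff, norm_mul, norm_mul, h.unif, norm_pow]
      have h3 := h.taylor_lt (derivative φ) hpos 1 h1 ht1 j hj
      have h4 : ‖ϖ‖ ^ j ≤ 1 := pow_le_one₀ (norm_nonneg ϖ) h.unif_lt.le
      have : ‖ϖ‖ ^ j * ‖(taylor t (derivative φ)).coeff j‖ < ‖φ.coeff 1‖ :=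
        (mul_le_of_le_one_left (norm_nonneg _) h4).trans_lt h3
      exact mul_lt_mul_of_pos_left this (inv_pos.2 hq)
    · intro j hj
      rw [e2, sb_coeff, norm_mul, norm_pow]
      have h3 := h.taylor_lt φ (C := (q : ℝ) ^ (s + 1) * ‖φ.coeff 1‖) (by positivity) 2 h2 ht1 j hj
      have h4 : ‖ϖ‖ ^ j ≤ ‖ϖ‖ ^ 2 := pow_le_pow_of_le_one (norm_nonneg ϖ) h.unif_lt.le hj
      calc ‖ϖ‖ ^ j * ‖(taylor t φ).coeff j‖ ≤ ‖ϖ‖ ^ 2 * ‖(taylor t φ).coeff j‖ := by gcongr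
        _ < ‖ϖ‖ ^ 2 * ((q : ℝ) ^ (s + 1) * ‖φ.coeff 1‖) := by gcongr
        _ = _ := by rw [h.unif, pow_succ]; field_simp; ring

end poly

/-- `d` is the largest index of a coefficient of maximal norm -/
def IsTop (H : K[X]) (d : ℕ) : Prop :=
  H.coeff d ≠ 0 ∧ (∀ j, ‖H.coeff j‖ ≤ ‖H.coeff d‖) ∧ ∀ j, d < j → ‖H.coeff j‖ < ‖H.coeff d‖

lemma exists_top (H : K[X]) (hH : H ≠ 0) : ∃ d, IsTop H d := by
  obtain ⟨d, hd, hmax⟩ := Finset.exists_max_image H.support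
    (fun j => (toLex (‖H.coeff j‖, j) : ℝ ×ₗ ℕ)) (by simpa using hH)
  have hd0 : H.coeff d ≠ 0 := by simpa using hd
  have key : ∀ j, ‖H.coeff j‖ < ‖H.coeff d‖ ∨ (‖H.coeff j‖ = ‖H.coeff d‖ ∧ j ≤ d) := by
    intro j
    by_cases hj : H.coeff j = 0
    · left; rw [hj, norm_zero]; exact norm_pos_iff.2 hd0
    · have := hmax j (by simpa using hj)
      rw [Prod.Lex.toLex_le_toLex] at this
      exact this
  refine ⟨d, hd0, fun j => ?_, fun j hj => ?_⟩
  · rcases key j with h1 | h1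
    · exact h1.le
    · exact h1.1.le
  · rcases key j with h1 | h1
    · exact h1
    · omega

lemma IsTop.smul {H : K[X]} {d : ℕ} (hH : IsTop H d) {u : K} (hu : u ≠ 0) : IsTop (C u * H) d := by
  have hu' : 0 < ‖u‖ := norm_pos_iff.2 hu
  refine ⟨?_, fun j => ?_, fun j hj => ?_⟩
  · rw [coeff_C_mul]; exact mul_ne_zero hu hH.1
  · simp only [coeff_C_mul, norm_mul]
    exact mul_le_mul_of_nonneg_left (hH.2.1 j) hu'.le
  · simp only [coeff_C_mul, norm_mul]
    exact mul_lt_mul_of_pos_left (hH.2.2 j hj) hu'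

section top
variable {q : ℕ} {ϖ : K} {T : Finset K} (h : LF K q ϖ T)

/-- the ring of integers -/
def LF.O (h : LF K q ϖ T) : Subring K where
  carrier := {x | ‖x‖ ≤ 1}
  mul_mem' := by
    intro a b ha hb
    simp only [Set.mem_ofPred_eq, norm_mul] at *
    exact mul_le_one₀ ha (norm_nonneg _) hb
  one_mem' := by simp
  add_mem' := by
    intro a b ha hb
    exact h.add_le ha hb
  zero_mem' := by simp
  neg_mem' := by
    intro a ha
    simpa using ha

/-- the maximal ideal -/
def LF.M (h : LF K q ϖ T) : Ideal h.O where
  carrier := {x | ‖(x : K)‖ < 1}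
  add_mem' := by
    intro a b ha hb
    exact h.add_lt ha hb
  zero_mem' := by simp
  smul_mem' := by
    intro a b hb
    have ha : ‖(a : K)‖ ≤ 1 := a.2
    simp only [Set.mem_ofPred_eq, smul_eq_mul, Subring.coe_mul, norm_mul] at *
    exact (mul_le_of_le_one_left (norm_nonneg _) ha).trans_lt hb

lemma LF.mem_M (x : h.O) : x ∈ h.M ↔ ‖(x : K)‖ < 1 := Iff.rfl

lemma LF.M_prime : h.M.IsPrime := by
  refine Ideal.isPrime_iff.2 ⟨?_, ?_⟩
  · rw [Ideal.ne_top_iff_one, h.mem_M]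
    simp
  · intro x y hxy
    rw [h.mem_M] at *
    rw [h.mem_M]
    by_contra hc
    push Not at hc
    have hx : ‖(x : K)‖ = 1 := le_antisymm x.2 hc.1
    have hy : ‖(y : K)‖ = 1 := le_antisymm y.2 hc.2
    simp [hx, hy] at hxy

include h

/-- superadditivity of the top index, normalized -/
lemma LF.top_sum_aux {H : K[X]} {d : ℕ} (h1 : ‖H.coeff d‖ = 1) (h2 : ∀ j, ‖H.coeff j‖ ≤ 1)
    (h3 : ∀ j, d < j → ‖H.coeff j‖ < 1) (δ : K → ℕ)
    (hδ : ∀ t ∈ T, IsTop (sb H t ϖ) (δ t)) : ∑ t ∈ T, δ t ≤ d := by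
  have hP := h.M_prime
  have hsub : (↑H.coeffs : Set K) ⊆ h.O := by
    intro x hx
    obtain ⟨n, -, rfl⟩ := mem_coeffs_iff.1 hx
    exact h2 n
  let g : (h.O)[X] := H.toSubring h.O hsub
  have hgc : ∀ n, ((g.coeff n : h.O) : K) = H.coeff n := fun n => coeff_toSubring H h.O hsub
  have hgm : g.map h.O.subtype = H := by
    ext n
    rw [coeff_map]
    exact hgc n
  let G := g.map (Ideal.Quotient.mk h.M)
  have hGc : ∀ n, G.coeff n = Ideal.Quotient.mk h.M (g.coeff n) := fun n => coeff_map _ _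
  have hGd : G.coeff d ≠ 0 := by
    rw [hGc, Ne, Ideal.Quotient.eq_zero_iff_mem, h.mem_M, hgc, h1]
    exact lt_irrefl _
  have hG0 : G ≠ 0 := by
    intro h0
    rw [h0] at hGd
    simp at hGd
  have hdeg : G.natDegree ≤ d := by
    rw [natDegree_le_iff_coeff_eq_zero]
    intro N hN
    rw [hGc, Ideal.Quotient.eq_zero_iff_mem, h.mem_M, hgc]
    exact h3 N hN
  let r : K → h.O ⧸ h.M := fun t =>
    if ht : ‖t‖ ≤ 1 then Ideal.Quotient.mk h.M ⟨t, ht⟩ else 0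
  have hr : Set.InjOn r T := by
    intro t ht t' ht' he
    have l1 := h.le_one t ht
    have l2 := h.le_one t' ht'
    simp only [r, l1, l2, dif_pos] at he
    rw [Ideal.Quotient.eq, h.mem_M] at he
    have he' : ‖t - t'‖ < 1 := he
    obtain ⟨s, hs, hu⟩ := h.rep t l1
    rw [hu t ⟨ht, by simp⟩, hu t' ⟨ht', he'⟩]
  have hle : ∀ t ∈ T, δ t ≤ G.rootMultiplicity (r t) := by
    intro t ht
    have l1 := h.le_one t ht
    let t' : h.O := ⟨t, l1⟩
    have hrt : r t = Ideal.Quotient.mk h.M t' := by simp [r, l1, t']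
    rw [rootMultiplicity_eq_natTrailingDegree]
    set m := (G.comp (X + C (r t))).natTrailingDegree with hm
    have hne : G.comp (X + C (r t)) ≠ 0 := by
      rw [← taylor_apply]
      intro h0
      exact hG0 ((taylor_eq_zero _ _).1 h0)
    have hcm : (G.comp (X + C (r t))).coeff m ≠ 0 := by
      rw [hm]
      exact mt (trailingCoeff_eq_zero).1 hne
    have e1 : G.comp (X + C (r t)) = (taylor t' g).map (Ideal.Quotient.mk h.M) := by
      rw [taylor_apply, Polynomial.map_comp, hrt]
      simp [G]
    have e2 : taylor t H = (taylor t' g).map h.O.subtype := by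
      rw [taylor_apply, taylor_apply, Polynomial.map_comp, hgm]
      simp [t']
    rw [e1, coeff_map, Ne, Ideal.Quotient.eq_zero_iff_mem, h.mem_M] at hcm
    push Not at hcm
    have e3 : (taylor t H).coeff m = ((taylor t' g).coeff m : h.O) := by rw [e2, coeff_map]; rfl
    rw [← e3] at hcm
    by_contra hc
    push Not at hc
    have hmax := (hδ t ht).2.1 m
    rw [sb_coeff, sb_coeff, norm_mul, norm_mul, norm_pow, norm_pow] at hmax
    have hb := h.taylor_le H zero_le_one 0 (fun j _ => h2 j) l1 (δ t) (by omega)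
    have h5 : 0 < ‖ϖ‖ := norm_pos_iff.2 h.unif_ne
    have h6 : ‖ϖ‖ ^ (δ t) < ‖ϖ‖ ^ m := pow_lt_pow_right_of_lt_one₀ h5 h.unif_lt hc
    have h7 : ‖ϖ‖ ^ m ≤ ‖ϖ‖ ^ m * ‖(taylor t H).coeff m‖ :=
      le_mul_of_one_le_right (by positivity) hcm
    have h8 : ‖ϖ‖ ^ (δ t) * ‖(taylor t H).coeff (δ t)‖ ≤ ‖ϖ‖ ^ (δ t) :=
      mul_le_of_le_one_right (by positivity) hb
    linarith
  calc ∑ t ∈ T, δ t ≤ ∑ t ∈ T, G.roots.count (r t) := by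
        refine Finset.sum_le_sum fun t ht => ?_
        rw [count_roots]
        exact hle t ht
    _ = ∑ s ∈ T.image r, G.roots.count s := by
        rw [Finset.sum_image hr]
    _ ≤ G.roots.card := by
        rw [← Multiset.sum_count_eq_card (s := T.image r ∪ G.roots.toFinset) (m := G.roots)]
        · exact Finset.sum_le_sum_of_subset Finset.subset_union_left
        · intro a ha
          simp only [Finset.mem_union, Multiset.mem_toFinset]
          exact Or.inr ha
    _ ≤ G.natDegree := card_roots' G
    _ ≤ d := hdeg

lemma LF.top_sum {H : K[X]} {d : ℕ} (hd : IsTop H d) (δ : K → ℕ)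
    (hδ : ∀ t ∈ T, IsTop (sb H t ϖ) (δ t)) : ∑ t ∈ T, δ t ≤ d := by
  have hu : (H.coeff d)⁻¹ ≠ 0 := inv_ne_zero hd.1
  have hn : 0 < ‖H.coeff d‖ := norm_pos_iff.2 hd.1
  refine h.top_sum_aux (H := C (H.coeff d)⁻¹ * H) ?_ ?_ ?_ δ fun t ht => ?_
  · simp [hn.ne']
  · intro j
    rw [coeff_C_mul, norm_mul, norm_inv, inv_mul_le_iff₀ hn, mul_one]
    exact hd.2.1 j
  · intro j hj
    rw [coeff_C_mul, norm_mul, norm_inv, inv_mul_lt_iff₀ hn, mul_one]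
    exact hd.2.2 j hj
  · rw [sb_Cmul]
    exact (hδ t ht).smul hu

lemma LF.sb_ne {H : K[X]} (hH : H ≠ 0) (t : K) : sb H t ϖ ≠ 0 := by
  intro h0
  apply hH
  rw [← taylor_eq_zero t H]
  ext j
  have := sb_coeff H t ϖ j
  rw [h0] at this
  simp only [coeff_zero] at this ⊢
  exact (mul_eq_zero.1 this.symm).resolve_left (pow_ne_zero _ h.unif_ne)

/-- main induction -/
lemma LF.main_ind {ψ : K → ℂ} (hψ : IsAddChar ψ) (k R : ℕ) (hk : 1 ≤ k)
    (hR : ∀ j : ℕ, 1 ≤ j → j ≤ k → 1 ≤ (q : ℝ) ^ R * ‖(j : K)‖) (n : ℕ) : ∀ (φ : K[X]) (d : ℕ),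
    (∀ b : K, ‖b‖ ≤ 1 → (q : ℝ) ^ R ≤ ‖(k : K) * (sb φ b (ϖ ^ n)).coeff k‖ ∧
      ∀ j, k < j → ‖(sb φ b (ϖ ^ n)).coeff j‖ < ‖(sb φ b (ϖ ^ n)).coeff k‖) →
    IsTop (derivative φ) d →
    ∀ᶠ m in atTop, ‖Av q ϖ T m (fun x => ψ (φ.eval x))‖ ≤ (q : ℝ)⁻¹ ^ n * d := by
  induction n with
  | zero =>
    intro φ d hQ hd
    rcases Nat.eq_zero_or_pos d with rfl | hd0
    · have e : sb φ 0 (ϖ ^ 0) = φ := by simp [sb]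
      obtain ⟨h1, h2⟩ := hQ 0 (by simp)
      rw [e] at h1 h2
      have d0 : (derivative φ).coeff 0 = φ.coeff 1 := by simp [coeff_derivative]
      have hdj : ∀ j, 1 ≤ j → (derivative φ).coeff (j - 1) = (j : K) * φ.coeff j := by
        intro j hj
        obtain ⟨i, rfl⟩ : ∃ i, j = i + 1 := ⟨j - 1, by omega⟩
        rw [coeff_derivative]
        simp [mul_comm]
      have hq := h.qpos
      have hqR : 0 < (q : ℝ) ^ R := by positivity
      have h3 : ‖(k : K) * φ.coeff k‖ ≤ ‖φ.coeff 1‖ := by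
        rw [← hdj k hk, ← d0]
        exact hd.2.1 _
      have hjb : ∀ j, 1 ≤ j → j ≤ k → ‖φ.coeff j‖ ≤ (q : ℝ) ^ R * ‖(j : K) * φ.coeff j‖ := by
        intro j hj1 hj2
        rw [norm_mul, ← mul_assoc]
        exact le_mul_of_one_le_left (norm_nonneg _) (hR j hj1 hj2)
      have := h.good_zero hψ R φ (h1.trans h3) ?_ ?_
      · simpa using this
      · intro j hj
        rw [← d0]
        exact hd.2.2 j (by omega)
      · intro j hj
        by_cases hjk : j ≤ k
        · refine (hjb j (by omega) hjk).trans_lt (mul_lt_mul_of_pos_left ?_ hqR)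
          rw [← hdj j (by omega), ← d0]
          exact hd.2.2 _ (by omega)
        · refine (h2 j (by omega)).trans_le ((hjb k hk le_rfl).trans ?_)
          exact mul_le_mul_of_nonneg_left h3 hqR.le
    · refine Filter.Eventually.of_forall fun m => ?_
      refine (h.ev_one m _ fun x => (hψ.norm_eq _).le).trans ?_
      rw [pow_zero, one_mul]
      exact_mod_cast hd0
  | succ n ih =>
    intro φ d hQ hd
    have hφ : derivative φ ≠ 0 := by
      intro h0
      apply hd.1
      rw [h0, coeff_zero]
    have hex : ∀ t : K, ∃ δ, IsTop (sb (derivative φ) t ϖ) δ := fun t =>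
      exists_top _ (h.sb_ne hφ t)
    choose δ hδ using hex
    have hsum := h.top_sum hd δ fun t _ => hδ t
    have := h.ev_step (F := fun x => ψ (φ.eval x)) (fun t => (q : ℝ)⁻¹ ^ n * δ t) (fun t ht => ?_)
    · filter_upwards [this] with m hm
      refine hm.trans ?_
      rw [← Finset.mul_sum, ← mul_assoc, ← pow_succ']
      have hq := h.qpos
      refine mul_le_mul_of_nonneg_left ?_ (by positivity)
      exact_mod_cast hsum
    · have := ih (sb φ t ϖ) (δ t) (fun b hb => ?_) ?_
      · simpa only [sb_eval] using this
      · rw [sb_sb, ← pow_succ']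
        exact hQ _ (h.mul_add_le (h.le_one t ht) h.unif_lt.le hb)
      · rw [sb_deriv]
        exact (hδ t).smul h.unif_ne

/-- the core estimate for polynomials -/
lemma LF.core {ψ : K → ℂ} (hψ : IsAddChar ψ) (k R : ℕ) (hk : 1 ≤ k) (f : K[X])
    (hkfac : 1 ≤ (q : ℝ) ^ R * ‖(k.factorial : K)‖)
    (h1 : ∀ b : K, ‖b‖ ≤ 1 → 1 ≤ ‖(k.factorial : K) * (taylor b f).coeff k‖)
    (h2 : ∀ b : K, ‖b‖ ≤ 1 → ∀ i, 1 ≤ i →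
      ‖(taylor b f).coeff (k + i)‖ < (q : ℝ) ^ (R * i) * ‖(taylor b f).coeff k‖)
    (y : K) (n : ℕ) (hy : (q : ℝ) ^ ((2 * R + n) * k + R) ≤ ‖y‖) :
    ∀ᶠ m in atTop, ‖Av q ϖ T m (fun x => ψ (y * f.eval x))‖ ≤ (q : ℝ)⁻¹ ^ n * k := by
  have hq := h.qpos
  have hfac : ∀ j : ℕ, 1 ≤ j → j ≤ k → ‖(k.factorial : K)‖ ≤ ‖(j : K)‖ := by
    intro j hj1 hj2
    obtain ⟨c, hc⟩ := Nat.dvd_factorial (by omega : 0 < j) hj2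
    rw [hc, Nat.cast_mul, mul_comm]
    exact h.nat_mul_le _ _
  have hR : ∀ j : ℕ, 1 ≤ j → j ≤ k → 1 ≤ (q : ℝ) ^ R * ‖(j : K)‖ := by
    intro j hj1 hj2
    exact hkfac.trans (mul_le_mul_of_nonneg_left (hfac j hj1 hj2) (by positivity))
  have hyp : 0 < ‖y‖ := lt_of_lt_of_le (by positivity) hy
  have hy0 : y ≠ 0 := norm_pos_iff.1 hyp
  have hϖ : 0 < ‖ϖ‖ := norm_pos_iff.2 h.unif_ne
  have hϖn : ∀ n : ℕ, ‖ϖ ^ n‖ ≤ 1 := fun n => by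
    rw [norm_pow]; exact pow_le_one₀ hϖ.le h.unif_lt.le
  have hqϖ : ∀ n : ℕ, (q : ℝ) ^ n * ‖ϖ‖ ^ n = 1 := fun n => by
    rw [h.unif, ← mul_pow, mul_inv_cancel₀ hq.ne', one_pow]
  have hkk : ∀ b : K, ‖b‖ ≤ 1 → 1 ≤ ‖(k : K)‖ * ‖(taylor b f).coeff k‖ := by
    intro b hb
    refine (h1 b hb).trans ?_
    rw [norm_mul]
    exact mul_le_mul_of_nonneg_right (hfac k hk le_rfl) (norm_nonneg _)
  refine h.ev_level (2 * R) _ _ fun b hb => ?_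
  set χ : K[X] := C y * sb f b (ϖ ^ (2 * R)) with hχ
  have hχe : ∀ x, χ.eval x = y * f.eval (b + ϖ ^ (2 * R) * x) := fun x => by
    rw [hχ, eval_mul, eval_C, sb_eval]
  simp only [← hχe]
  -- comparision of coefficients
  have hcmp : ∀ b : K, ‖b‖ ≤ 1 → ∀ (N : ℕ), R ≤ N → ∀ i, 1 ≤ i →
      ‖ϖ‖ ^ (N * (k + i)) * ‖(taylor b f).coeff (k + i)‖ <
        ‖ϖ‖ ^ (N * k) * (‖ϖ‖ ^ (N - R) * ‖(taylor b f).coeff k‖) := by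
    intro b hb N hN i hi
    have e := h2 b hb i hi
    have hpos : 0 < ‖(taylor b f).coeff k‖ := by
      by_contra hc
      push Not at hc
      have := hkk b hb
      have h0 : ‖(taylor b f).coeff k‖ = 0 := le_antisymm hc (norm_nonneg _)
      rw [h0, mul_zero] at this
      linarith
    rw [mul_add, pow_add, mul_assoc]
    refine mul_lt_mul_of_pos_left ?_ (by positivity)
    calc ‖ϖ‖ ^ (N * i) * ‖(taylor b f).coeff (k + i)‖
        < ‖ϖ‖ ^ (N * i) * ((q : ℝ) ^ (R * i) * ‖(taylor b f).coeff k‖) := by gcongr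
      _ = ‖ϖ‖ ^ ((N - R) * i) * ‖(taylor b f).coeff k‖ := by
          have e1 : N * i = (N - R) * i + R * i := by
            rw [← add_mul]; congr 1; omega
          rw [e1, pow_add]
          have := hqϖ (R * i)
          linear_combination (‖ϖ‖ ^ ((N - R) * i) * ‖(taylor b f).coeff k‖) * this
      _ ≤ _ := by
          refine mul_le_mul_of_nonneg_right ?_ (norm_nonneg _)
          exact pow_le_pow_of_le_one hϖ.le h.unif_lt.le (Nat.le_mul_of_pos_right _ hi)
  have hcoef : ∀ (b : K) (N j : ℕ), ‖(C y * sb f b (ϖ ^ N)).coeff j‖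
      = ‖y‖ * (‖ϖ‖ ^ (N * j) * ‖(taylor b f).coeff j‖) := by
    intro b N j
    rw [coeff_C_mul, sb_coeff, norm_mul, norm_mul, norm_pow, norm_pow, pow_mul]
  have hQ : ∀ c : K, ‖c‖ ≤ 1 → (q : ℝ) ^ R ≤ ‖(k : K) * (sb χ c (ϖ ^ n)).coeff k‖ ∧
      ∀ j, k < j → ‖(sb χ c (ϖ ^ n)).coeff j‖ < ‖(sb χ c (ϖ ^ n)).coeff k‖ := by
    intro c hc
    rw [hχ, sb_Cmul, sb_sb, ← pow_add]
    have hb' := h.mul_add_le hb (hϖn (2 * R)) hc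
    set b' := b + ϖ ^ (2 * R) * c
    constructor
    · rw [norm_mul, hcoef]
      have e1 := hkk b' hb'
      have e2 : (q : ℝ) ^ R ≤ ‖y‖ * ‖ϖ‖ ^ ((2 * R + n) * k) := by
        have := hqϖ ((2 * R + n) * k)
        calc (q : ℝ) ^ R = (q : ℝ) ^ ((2 * R + n) * k + R) * ‖ϖ‖ ^ ((2 * R + n) * k) := by
              rw [pow_add]; linear_combination (-(q : ℝ) ^ R) * this
          _ ≤ _ := by gcongr
      calc (q : ℝ) ^ R ≤ (‖y‖ * ‖ϖ‖ ^ ((2 * R + n) * k)) * (‖(k : K)‖ * ‖(taylor b' f).coeff k‖) :=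
            e2.trans (le_mul_of_one_le_right (by positivity) e1)
        _ = _ := by ring
    · intro j hj
      obtain ⟨i, rfl⟩ : ∃ i, j = k + i := ⟨j - k, by omega⟩
      rw [hcoef, hcoef]
      refine mul_lt_mul_of_pos_left ?_ hyp
      refine (hcmp b' hb' (2 * R + n) (by omega) i (by omega)).trans_le ?_
      refine mul_le_mul_of_nonneg_left ?_ (by positivity)
      exact mul_le_of_le_one_left (norm_nonneg _) (pow_le_one₀ hϖ.le h.unif_lt.le)
  -- the top index of the derivative
  have hdj : ∀ j, ‖(derivative χ).coeff j‖ = ‖((j + 1 : ℕ) : K)‖ * ‖χ.coeff (j + 1)‖ := by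
    intro j
    rw [coeff_derivative, norm_mul, mul_comm]
    simp
  have hlt : ∀ j, k ≤ j → ‖(derivative χ).coeff j‖ < ‖(derivative χ).coeff (k - 1)‖ := by
    intro j hj
    rw [hdj, hdj]
    have ek : k - 1 + 1 = k := by omega
    rw [ek]
    obtain ⟨i, hi⟩ : ∃ i, j + 1 = k + i := ⟨j + 1 - k, by omega⟩
    rw [hi]
    refine (mul_le_of_le_one_left (norm_nonneg _) (h.nat_le _)).trans_lt ?_
    rw [hχ, hcoef, hcoef]
    have e1 := hcmp b hb (2 * R) (by omega) i (by omega)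
    have e2 : ‖ϖ‖ ^ (2 * R - R) ≤ ‖(k : K)‖ := by
      have e3 : 2 * R - R = R := by omega
      rw [e3]
      have := hR k hk le_rfl
      have e4 := hqϖ R
      have hqR : 0 < (q : ℝ) ^ R := by positivity
      rw [← e4] at this
      exact le_of_mul_le_mul_left this hqR
    rw [mul_left_comm ‖(k : K)‖]
    refine mul_lt_mul_of_pos_left (e1.trans_le ?_) hyp
    refine mul_le_mul_of_nonneg_right e2 (by positivity) |>.trans' ?_
    exact le_of_eq (by ring)
  have hne : derivative χ ≠ 0 := by
    intro h0
    have := hlt k le_rfl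
    rw [h0] at this
    simp at this
  obtain ⟨d, hd⟩ := exists_top _ hne
  have hdk : d ≤ k := by
    by_contra hc
    push Not at hc
    have e1 := hlt d hc.le
    have e2 := hd.2.1 (k - 1)
    linarith
  filter_upwards [h.main_ind hψ k R hk hR n χ d hQ hd] with m hm
  refine hm.trans (mul_le_mul_of_nonneg_left ?_ (by positivity))
  exact_mod_cast hdk

/-- final form of the estimate for polynomials -/
lemma LF.core' {ψ : K → ℂ} (hψ : IsAddChar ψ) (k R : ℕ) (hk : 1 ≤ k) (f : K[X])
    (hkfac : 1 ≤ (q : ℝ) ^ R * ‖(k.factorial : K)‖)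
    (h1 : ∀ b : K, ‖b‖ ≤ 1 → 1 ≤ ‖(k.factorial : K) * (taylor b f).coeff k‖)
    (h2 : ∀ b : K, ‖b‖ ≤ 1 → ∀ i, 1 ≤ i →
      ‖(taylor b f).coeff (k + i)‖ < (q : ℝ) ^ (R * i) * ‖(taylor b f).coeff k‖)
    (y : K) (hy : y ≠ 0) :
    ∀ᶠ m in atTop, ‖Av q ϖ T m (fun x => ψ (y * f.eval x))‖
      ≤ (k * (q : ℝ) ^ (3 * R + 1)) * ‖y‖ ^ (-(1 : ℝ) / k) := by
  have hq := h.qpos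
  have hq1 := h.q1
  have hk0 : (0 : ℝ) < k := by exact_mod_cast hk
  have hk1 : (1 : ℝ) ≤ k := by exact_mod_cast hk
  obtain ⟨Y, hY⟩ := h.discrete y hy
  have hnorm : ‖y‖ ^ (-(1 : ℝ) / k) = (q : ℝ) ^ (-(Y : ℝ) / k) := by
    rw [hY, ← Real.rpow_intCast, ← Real.rpow_mul hq.le]
    congr 1
    ring
  have hC : (k * (q : ℝ) ^ (3 * R + 1)) * ‖y‖ ^ (-(1 : ℝ) / k)
      = (q : ℝ) ^ ((3 * R + 1 : ℝ) - Y / k) * k := by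
    rw [hnorm, ← Real.rpow_natCast, sub_eq_add_neg, Real.rpow_add hq]
    push_cast
    rw [neg_div]
    ring
  rw [hC]
  by_cases hbig : ((2 * R * k + R : ℕ) : ℤ) ≤ Y
  · obtain ⟨Z, hZ⟩ := Int.eq_ofNat_of_zero_le (sub_nonneg.2 hbig)
    set n := Z / k with hn
    have hnZ : n * k ≤ Z := Nat.div_mul_le_self Z k
    have hnZ' : Z < (n + 1) * k := by
      have := Nat.lt_div_mul_add (a := Z) (b := k) (by omega)
      rw [add_mul, one_mul]; exact this
    have hyn : (q : ℝ) ^ ((2 * R + n) * k + R) ≤ ‖y‖ := by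
      rw [hY, ← zpow_natCast]
      apply zpow_le_zpow_right₀ hq1.le
      have : Y = ((2 * R * k + R + Z : ℕ) : ℤ) := by
        have : Y - ((2 * R * k + R : ℕ) : ℤ) = Z := hZ
        rw [Nat.cast_add]; omega
      rw [this]
      have : (2 * R + n) * k = 2 * R * k + n * k := by ring
      rw [this]
      exact_mod_cast (by omega)
    filter_upwards [h.core hψ k R hk f hkfac h1 h2 y n hyn] with m hm
    refine hm.trans (mul_le_mul_of_nonneg_right ?_ hk0.le)
    rw [← Real.rpow_natCast, Real.inv_rpow hq.le, ← Real.rpow_neg hq.le]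
    apply Real.rpow_le_rpow_of_exponent_le hq1.le
    have hYr : (Y : ℝ) = 2 * R * k + R + Z := by
      have : Y = ((2 * R * k + R : ℕ) : ℤ) + Z := by
        have : Y - ((2 * R * k + R : ℕ) : ℤ) = Z := hZ
        omega
      rw [this]; push_cast; ring
    have hZr : (Z : ℝ) ≤ (n + 1) * k := by exact_mod_cast hnZ'.le
    have hRr : (0 : ℝ) ≤ R := by positivity
    have : (Y : ℝ) / k ≤ 2 * R + R + (n + 1) := by
      rw [div_le_iff₀ hk0, hYr]
      nlinarith
    linarith
  · refine Filter.Eventually.of_forall fun m => ?_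
    refine (h.ev_one m _ fun x => (hψ.norm_eq _).le).trans ?_
    have : (1 : ℝ) ≤ (q : ℝ) ^ ((3 * R + 1 : ℝ) - Y / k) := by
      apply Real.one_le_rpow hq1.le
      push Not at hbig
      have hYr : (Y : ℝ) ≤ 2 * R * k + R := by exact_mod_cast hbig.le
      have hRr : (0 : ℝ) ≤ R := by positivity
      have : (Y : ℝ) / k ≤ 2 * R + R := by
        rw [div_le_iff₀ hk0]
        nlinarith
      linarith
    exact one_le_mul_of_one_le_of_one_le this hk1

end top

section measure
variable {q : ℕ} {ϖ : K} {T : Finset K} (h : LF K q ϖ T)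

lemma measure_preimage_le [MeasurableSpace K] (μ : Measure K) (hμ : μ.IsAddHaarMeasure)
    (h0 : μ ≠ 0) (g : K) : AEMeasurable (fun x => g + x) μ ∧
      ∀ A : Set K, μ ((fun x => g + x) ⁻¹' A) ≤ μ A := by
  have hinv : μ.map (fun x => g + x) = μ := Measure.IsAddLeftInvariant.map_add_left_eq_self g
  have hae : AEMeasurable (fun x => g + x) μ := by
    by_contra hc
    rw [Measure.map_of_not_aemeasurable hc] at hinv
    exact h0 hinv.symm
  refine ⟨hae, fun A => ?_⟩
  calc μ ((fun x => g + x) ⁻¹' A) ≤ μ ((fun x => g + x) ⁻¹' (toMeasurable μ A)) :=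
        measure_mono (Set.preimage_mono (subset_toMeasurable μ A))
    _ = μ.map (fun x => g + x) (toMeasurable μ A) :=
        (Measure.map_apply_of_aemeasurable hae (measurableSet_toMeasurable μ A)).symm
    _ = μ A := by rw [hinv, measure_toMeasurable]

lemma measure_preimage_eq [MeasurableSpace K] (μ : Measure K) (hμ : μ.IsAddHaarMeasure)
    (h0 : μ ≠ 0) (g : K) (A : Set K) : μ ((fun x => g + x) ⁻¹' A) = μ A := by
  apply le_antisymm ((measure_preimage_le μ hμ h0 g).2 A)
  have := (measure_preimage_le μ hμ h0 (-g)).2 ((fun x => g + x) ⁻¹' A)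
  rw [← Set.preimage_comp] at this
  have e : ((fun x => g + x) ∘ fun x => -g + x) = (id : K → K) := by ext x; simp
  rwa [e, Set.preimage_id] at this

include h in
lemma LF.map_restrict [MeasurableSpace K] (μ : Measure K) (hμ : μ.IsAddHaarMeasure)
    (h0 : μ ≠ 0) {g : K} (hg : ‖g‖ ≤ 1) :
    AEMeasurable (fun x => g + x) (μ.restrict {x : K | ‖x‖ ≤ 1}) ∧
    (μ.restrict {x : K | ‖x‖ ≤ 1}).map (fun x => g + x) = μ.restrict {x : K | ‖x‖ ≤ 1} := by
  have hae := (measure_preimage_le μ hμ h0 g).1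
  have hae' : AEMeasurable (fun x => g + x) (μ.restrict {x : K | ‖x‖ ≤ 1}) := hae.restrict
  refine ⟨hae', ?_⟩
  ext t ht
  rw [Measure.map_apply_of_aemeasurable hae' ht, Measure.restrict_apply ht,
    Measure.restrict_apply₀ (hae'.nullMeasurableSet_preimage ht),
    ← measure_preimage_eq μ hμ h0 g (t ∩ _), Set.preimage_inter]
  congr 2
  ext x
  constructor
  · intro hx
    exact h.add_le hg hx
  · intro hx
    have : ‖(g + x) - g‖ ≤ 1 := h.sub_le hx hg
    simpa using this

include h in
lemma LF.integral_eq [MeasurableSpace K] (μ : Measure K) (hμ : μ.IsAddHaarMeasure)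
    (h1 : μ {x : K | ‖x‖ ≤ 1} = 1) (F : K → ℂ) (N : ℕ)
    (hF : ∀ x y, ‖x‖ ≤ 1 → ‖y‖ ≤ 1 → ‖x - y‖ ≤ ‖ϖ‖ ^ N → F x = F y) :
    ∫ x in {x : K | ‖x‖ ≤ 1}, F x ∂μ = 0 ∨
      ∫ x in {x : K | ‖x‖ ≤ 1}, F x ∂μ = Av q ϖ T N F := by
  have h0 : μ ≠ 0 := by
    intro h0
    rw [h0] at h1
    simp at h1
  set ν := μ.restrict {x : K | ‖x‖ ≤ 1} with hν
  by_cases hFint : Integrable F ν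
  swap
  · left; exact integral_undef hFint
  right
  have hprob : IsProbabilityMeasure ν := ⟨by rw [hν, Measure.restrict_apply_univ, h1]⟩
  have base : ∀ g : K, ‖g‖ ≤ 1 → Integrable (fun x => F (g + x)) ν ∧
      ∫ x, F (g + x) ∂ν = ∫ x, F x ∂ν := by
    intro g hg
    obtain ⟨hae, hmap⟩ := h.map_restrict μ hμ h0 hg
    rw [← hν] at hae hmap
    have hFint' : Integrable F (ν.map (fun x => g + x)) := by rw [hmap]; exact hFint
    refine ⟨(integrable_map_measure hFint'.aestronglyMeasurable hae).1 hFint', ?_⟩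
    have := integral_map hae hFint'.aestronglyMeasurable
    rw [hmap] at this
    exact this.symm
  have key : ∀ (n : ℕ) (α β : K), ‖α‖ ≤ 1 → ‖β‖ ≤ 1 →
      Integrable (fun x => Av q ϖ T n (fun z => F (α + β * z + x))) ν ∧
      ∫ x, Av q ϖ T n (fun z => F (α + β * z + x)) ∂ν = ∫ x, F x ∂ν := by
    intro n
    induction n with
    | zero =>
      intro α β hα hβ
      simpa [Av] using base α hα
    | succ n ih =>
      intro α β hα hβ
      have e : ∀ x t, Av q ϖ T n (fun z => F (α + β * (t + ϖ * z) + x))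
          = Av q ϖ T n (fun z => F ((α + β * t) + (β * ϖ) * z + x)) := by
        intro x t
        congr 1
        ext z
        congr 1
        ring
      have hβ' : ‖β * ϖ‖ ≤ 1 := by
        rw [norm_mul]
        exact mul_le_one₀ hβ (norm_nonneg _) h.unif_lt.le
      have ih' : ∀ t ∈ T, _ := fun t ht =>
        ih (α + β * t) (β * ϖ) (h.mul_add_le hα hβ (h.le_one t ht)) hβ'
      simp only [Av, e]
      refine ⟨(integrable_finset_sum T fun t ht => (ih' t ht).1).const_mul _, ?_⟩
      rw [integral_const_mul, integral_finset_sum T fun t ht => (ih' t ht).1,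
        Finset.sum_congr rfl fun t ht => (ih' t ht).2, Finset.sum_const, h.card, nsmul_eq_mul,
        ← mul_assoc, inv_mul_cancel₀, one_mul]
      exact_mod_cast h.qpos.ne'
  obtain ⟨k1, k2⟩ := key N 0 1 (by simp) (by simp)
  rw [← k2]
  have hae : ∀ᵐ x ∂ν, Av q ϖ T N (fun z => F (0 + 1 * z + x)) = Av q ϖ T N F := by
    rw [hν, ae_restrict_iff₀]
    · refine Filter.Eventually.of_forall fun x hx => ?_
      have := h.av_trans N F hF x hx
      simpa using this
    · exact k1.aestronglyMeasurable.nullMeasurableSet_eq_fun aestronglyMeasurable_const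
  rw [integral_congr_ae hae, integral_const]
  simp

end measure

section trunc
variable {q : ℕ} {ϖ : K} {T : Finset K} (h : LF K q ϖ T)
include h

lemma LF.pseval_sub_le [CompleteSpace K] {u : ℕ → K} (hu : IsConvergent u) (V : K[X]) {ε : ℝ}
    (hε : 0 ≤ ε) (huV : ∀ i, ‖u i - V.coeff i‖ ≤ ε) {x : K} (hx : ‖x‖ ≤ 1) :
    ‖pseval u x - V.eval x‖ ≤ ε := by
  have := h.ultra
  have hx' : ∀ i, ‖x ^ i‖ ≤ 1 := fun i => by rw [norm_pow]; exact pow_le_one₀ (norm_nonneg _) hx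
  have hs : Summable (fun i => u i * x ^ i) := by
    apply NonarchimedeanAddGroup.summable_of_tendsto_cofinite_zero
    rw [Nat.cofinite_eq_atTop, tendsto_zero_iff_norm_tendsto_zero]
    refine squeeze_zero (fun i => norm_nonneg _) (fun i => ?_) hu
    rw [norm_mul]
    exact mul_le_of_le_one_right (norm_nonneg _) (hx' i)
  have hV : HasSum (fun i => V.coeff i * x ^ i) (V.eval x) := by
    rw [eval_eq_sum, Polynomial.sum]
    apply hasSum_sum_of_ne_finset_zero
    intro b hb
    rw [notMem_support_iff.1 hb, zero_mul]
  have e : pseval u x - V.eval x = ∑' i, (u i * x ^ i - V.coeff i * x ^ i) := by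
    rw [hs.tsum_sub hV.summable, hV.tsum_eq]
    rfl
  rw [e]
  refine IsUltrametricDist.norm_tsum_le_of_forall_le_of_nonneg hε fun i => ?_
  rw [← sub_mul, norm_mul]
  exact (mul_le_of_le_one_right (norm_nonneg _) (hx' i)).trans (huV i)

lemma LF.conv_dcoeff {a : ℕ → K} (ha : IsConvergent a) (k : ℕ) : IsConvergent (dcoeff^[k] a) := by
  induction k with
  | zero => exact ha
  | succ k ih =>
    rw [Function.iterate_succ_apply']
    refine squeeze_zero (fun i => norm_nonneg _) (fun i => h.nat_mul_le (i + 1) _) ?_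
    exact ih.comp (tendsto_add_atTop_nat 1)

lemma LF.dcoeff_sub {a : ℕ → K} {P : K[X]} {ε : ℝ} (haP : ∀ i, ‖a i - P.coeff i‖ ≤ ε) (k : ℕ) :
    ∀ i, ‖(dcoeff^[k] a) i - (derivative^[k] P).coeff i‖ ≤ ε := by
  induction k with
  | zero => exact haP
  | succ k ih =>
    intro i
    rw [Function.iterate_succ_apply', Function.iterate_succ_apply', coeff_derivative]
    have := (h.nat_mul_le (i + 1) _).trans (ih (i + 1))
    refine le_trans (le_of_eq ?_) this
    congr 1
    simp only [dcoeff]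
    push_cast
    ring

lemma LF.shift_sub [CompleteSpace K] {u : ℕ → K} (hu : IsConvergent u) (V : K[X]) {ε : ℝ}
    (hε : 0 ≤ ε) (huV : ∀ i, ‖u i - V.coeff i‖ ≤ ε) {b : K} (hb : ‖b‖ ≤ 1) (j : ℕ) :
    ‖(∑' m : ℕ, ((m + j).choose j : K) * u (m + j) * b ^ m) - (taylor b V).coeff j‖ ≤ ε := by
  rw [taylor_coeff]
  refine h.pseval_sub_le (u := fun m => ((m + j).choose j : K) * u (m + j)) ?_ _ hε (fun i => ?_) hb
  · refine squeeze_zero (fun i => norm_nonneg _) (fun i => h.nat_mul_le _ _) ?_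
    exact hu.comp (tendsto_add_atTop_nat j)
  · rw [hasseDeriv_coeff, ← mul_sub]
    exact (h.nat_mul_le _ _).trans (huV _)

omit h in
lemma exists_trunc {a : ℕ → K} (ha : IsConvergent a) {ε : ℝ} (hε : 0 < ε) :
    ∃ P : K[X], (∀ i, ‖a i - P.coeff i‖ ≤ ε) ∧ ∀ i, P.coeff i = a i ∨ P.coeff i = 0 := by
  obtain ⟨N, hN⟩ := Filter.eventually_atTop.1 (ha.eventually (gt_mem_nhds hε))
  refine ⟨PowerSeries.trunc N (PowerSeries.mk a), fun i => ?_, fun i => ?_⟩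
  · rw [PowerSeries.coeff_trunc]
    split_ifs with hi
    · simpa using hε.le
    · simpa using (hN i (by omega)).le
  · rw [PowerSeries.coeff_trunc]
    split_ifs with hi
    · left; simp
    · right; rfl

lemma LF.eval_lip (P : K[X]) {B : ℝ} (hB : 0 ≤ B) (hP : ∀ j, ‖P.coeff j‖ ≤ B) {x y : K}
    (hx : ‖x‖ ≤ 1) (hy : ‖y‖ ≤ 1) : ‖P.eval x - P.eval y‖ ≤ B * ‖x - y‖ := by
  have hpow : ∀ i : ℕ, ‖x ^ i - y ^ i‖ ≤ ‖x - y‖ := by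
    intro i
    induction i with
    | zero => simp
    | succ i ih =>
      have e : x ^ (i + 1) - y ^ (i + 1) = x ^ i * (x - y) + (x ^ i - y ^ i) * y := by ring
      rw [e]
      refine h.add_le ?_ ?_
      · rw [norm_mul, norm_pow]
        exact mul_le_of_le_one_left (norm_nonneg _) (pow_le_one₀ (norm_nonneg _) hx)
      · rw [norm_mul]
        exact (mul_le_of_le_one_right (norm_nonneg _) hy).trans ih
  rw [eval_eq_sum_range, eval_eq_sum_range, ← Finset.sum_sub_distrib]
  refine h.sum_le _ _ (by positivity) fun i _ => ?_
  rw [← mul_sub, norm_mul]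
  exact mul_le_mul (hP i) (hpow i) (norm_nonneg _) hB

lemma LF.poly_bdd (P : K[X]) : ∃ B : ℝ, 0 ≤ B ∧ ∀ j, ‖P.coeff j‖ ≤ B := by
  refine ⟨∑ i ∈ P.support, ‖P.coeff i‖, by positivity, fun j => ?_⟩
  by_cases hj : j ∈ P.support
  · exact Finset.single_le_sum (f := fun i => ‖P.coeff i‖) (fun i _ => norm_nonneg _) hj
  · rw [notMem_support_iff.1 hj, norm_zero]; positivity

/-- transfer of an eventual bound on averages to the integral -/
lemma LF.integral_bound [MeasurableSpace K] (μ : Measure K) (hμ : μ.IsAddHaarMeasure)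
    (h1 : μ {x : K | ‖x‖ ≤ 1} = 1) {ψ : K → ℂ} (hψ : IsAddChar ψ) (f : K → K) (P : K[X]) (y : K)
    (hfP : ∀ x, ‖x‖ ≤ 1 → ‖y * f x - y * P.eval x‖ < 1) {B : ℝ} (hB : 0 ≤ B)
    (hb : ∀ᶠ m in atTop, ‖Av q ϖ T m (fun x => ψ (y * P.eval x))‖ ≤ B) :
    ‖∫ x in {x : K | ‖x‖ ≤ 1}, ψ (y * f x) ∂μ‖ ≤ B := by
  obtain ⟨A, hA0, hA⟩ := h.poly_bdd P
  have hlim : Tendsto (fun n : ℕ => ‖y‖ * A * ‖ϖ‖ ^ n) atTop (nhds 0) := by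
    simpa using (tendsto_pow_atTop_nhds_zero_of_lt_one (norm_nonneg ϖ) h.unif_lt).const_mul (‖y‖ * A)
  obtain ⟨N, hN1, hN2⟩ := (hb.and (hlim.eventually (gt_mem_nhds one_pos))).exists
  have hc : ∀ x, ‖x‖ ≤ 1 → ψ (y * f x) = ψ (y * P.eval x) := fun x hx =>
    psi_congr hψ (hfP x hx)
  have := h.integral_eq μ hμ h1 (fun x => ψ (y * f x)) N ?_
  · rcases this with h0 | h0
    · rw [h0, norm_zero]; exact hB
    · rw [h0, h.av_congr N _ _ hc]; exact hN1
  · intro a b ha hb' hab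
    show ψ (y * f a) = ψ (y * f b)
    rw [hc a ha, hc b hb']
    apply psi_congr hψ
    rw [← mul_sub, norm_mul]
    calc ‖y‖ * ‖P.eval a - P.eval b‖ ≤ ‖y‖ * (A * ‖a - b‖) := by
          gcongr; exact h.eval_lip P hA0 hA ha hb'
      _ ≤ ‖y‖ * (A * ‖ϖ‖ ^ N) := by gcongr
      _ = ‖y‖ * A * ‖ϖ‖ ^ N := by ring
      _ < 1 := hN2

lemma fact_taylor (P : K[X]) (b : K) (k : ℕ) :
    (derivative^[k] P).eval b = (k.factorial : K) * (taylor b P).coeff k := by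
  rw [taylor_coeff, ← factorial_smul_hasseDeriv]
  simp

/-- estimate with truncation -/
lemma LF.final [CompleteSpace K] [MeasurableSpace K] (μ : Measure K) (hμ : μ.IsAddHaarMeasure)
    (h1 : μ {x : K | ‖x‖ ≤ 1} = 1) {ψ : K → ℂ} (hψ : IsAddChar ψ) (k R : ℕ) (hk : 1 ≤ k)
    (a : ℕ → K) (ha : IsConvergent a)
    (hder : ∀ x : K, ‖x‖ ≤ 1 → 1 ≤ ‖pseval (dcoeff^[k] a) x‖)
    (hP : ∀ (P : K[X]) (ε : ℝ), 0 < ε → ε < 1 → (∀ i, ‖a i - P.coeff i‖ ≤ ε) →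
      (∀ i, P.coeff i = a i ∨ P.coeff i = 0) →
      (∀ b : K, ‖b‖ ≤ 1 → 1 ≤ ‖(k.factorial : K) * (taylor b P).coeff k‖) →
      1 ≤ (q : ℝ) ^ R * ‖(k.factorial : K)‖ ∧
      (∀ b : K, ‖b‖ ≤ 1 → ∀ i, 1 ≤ i →
        ‖(taylor b P).coeff (k + i)‖ < (q : ℝ) ^ (R * i) * ‖(taylor b P).coeff k‖))
    (y : K) (hy : y ≠ 0) :
    ‖∫ x in {x : K | ‖x‖ ≤ 1}, ψ (y * pseval a x) ∂μ‖
      ≤ (k * (q : ℝ) ^ (3 * R + 1)) * ‖y‖ ^ (-(1 : ℝ) / k) := by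
  have hyp : 0 < ‖y‖ := norm_pos_iff.2 hy
  have hq := h.qpos
  set ε : ℝ := 1 / (2 * (1 + ‖y‖)) with hε
  have hε0 : 0 < ε := by positivity
  have hε1 : ε < 1 := by rw [hε, div_lt_one (by positivity)]; linarith
  have hε2 : ‖y‖ * ε < 1 := by rw [hε, mul_one_div, div_lt_one (by positivity)]; linarith
  obtain ⟨P, hP1, hP2⟩ := exists_trunc ha hε0
  have hd : ∀ b : K, ‖b‖ ≤ 1 → 1 ≤ ‖(k.factorial : K) * (taylor b P).coeff k‖ := by
    intro b hb
    rw [← fact_taylor h]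
    have e := h.pseval_sub_le (h.conv_dcoeff ha k) _ hε0.le (h.dcoeff_sub hP1 k) hb
    rw [norm_sub_rev] at e
    rw [h.norm_eq_of_sub_lt (e.trans_lt (hε1.trans_le (hder b hb)))]
    exact hder b hb
  obtain ⟨hR, h2⟩ := hP P ε hε0 hε1 hP1 hP2 hd
  refine h.integral_bound μ hμ h1 hψ (pseval a) P y (fun x hx => ?_) (by positivity)
    (h.core' hψ k R hk P hR hd h2 y hy)
  rw [← mul_sub, norm_mul]
  refine lt_of_le_of_lt ?_ hε2
  exact mul_le_mul_of_nonneg_left (h.pseval_sub_le ha P hε0.le hP1 hx) hyp.le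

end trunc

lemma exists_LF {q : ℕ} (hK : IsLocalField K q) : ∃ (ϖ : K) (T : Finset K), LF K q ϖ T := by
  obtain ⟨ϖ, hϖ⟩ := hK.exists_unif
  obtain ⟨T, hT1, hT2, hT3⟩ := hK.residue
  exact ⟨ϖ, T, IsUltrametricDist.isUltrametricDist_of_isNonarchimedean_norm hK.nonarch, hK.one_lt,
    hϖ, hK.discrete, hT1, hT2, hT3⟩

/-- lower bound for norms of natural numbers -/
lemma LF.nat_lower {q : ℕ} {ϖ : K} {T : Finset K} (h : LF K q ϖ T) {p e : ℕ}
    (hp : IsResidueData K q p e) (N L : ℕ) (hN : 1 ≤ N) (hNL : N ≤ 2 ^ L) :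
    1 ≤ (q : ℝ) ^ (e * L) * ‖(N : K)‖ := by
  obtain ⟨hprime, -, he, hpe⟩ := hp
  have hq := h.qpos
  have hp1 : ‖(p : K)‖ < 1 := by
    rw [hpe]
    exact pow_lt_one₀ (inv_nonneg.2 hq.le) (inv_lt_one_of_one_lt₀ h.q1) he.ne'
  obtain ⟨v, u, hu, hN'⟩ := Nat.exists_eq_pow_mul_and_not_dvd (n := N) (by omega) p hprime.ne_one
  have hun : ‖(u : K)‖ = 1 := by
    have hcop : Nat.Coprime u p := ((Nat.Prime.coprime_iff_not_dvd hprime).2 hu).symm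
    have hbez := Nat.gcd_eq_gcd_ab u p
    rw [hcop.gcd_eq_one] at hbez
    have hbez' : (1 : K) = (u : K) * ((u.gcdA p : ℤ) : K) + (p : K) * ((u.gcdB p : ℤ) : K) := by
      exact_mod_cast congrArg (fun z : ℤ => (z : K)) hbez
    have := h.ultra
    have hz : ∀ z : ℤ, ‖(z : K)‖ ≤ 1 := fun z => IsUltrametricDist.norm_intCast_le_one K z
    by_contra hc
    have hlt : ‖(u : K)‖ < 1 := lt_of_le_of_ne (h.nat_le u) hc
    have : ‖(1 : K)‖ < 1 := by
      rw [hbez']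
      refine h.add_lt ?_ ?_
      · rw [norm_mul]; exact (mul_le_of_le_one_right (norm_nonneg _) (hz _)).trans_lt hlt
      · rw [norm_mul]; exact (mul_le_of_le_one_right (norm_nonneg _) (hz _)).trans_lt hp1
    simp at this
  have hv : v ≤ L := by
    have hu0 : 0 < u := by
      rcases Nat.eq_zero_or_pos u with rfl | h0
      · simp at hu
      · exact h0
    have h1 : 2 ^ v ≤ 2 ^ L := by
      calc 2 ^ v ≤ p ^ v := Nat.pow_le_pow_left hprime.two_le v
        _ ≤ p ^ v * u := Nat.le_mul_of_pos_right _ hu0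
        _ = N := hN'.symm
        _ ≤ 2 ^ L := hNL
    exact (Nat.pow_le_pow_iff_right (by norm_num)).1 h1
  have hNn : ‖(N : K)‖ = (q : ℝ)⁻¹ ^ (e * v) := by
    rw [hN', Nat.cast_mul, Nat.cast_pow, norm_mul, norm_pow, hun, hpe, mul_one, pow_mul]
  rw [hNn, inv_pow, ← div_eq_mul_inv, one_le_div (by positivity)]
  exact pow_le_pow_right₀ h.q1.le (Nat.mul_le_mul_left _ hv)



lemma LF.hP_gauss {q : ℕ} {ϖ : K} {T : Finset K} (h : LF K q ϖ T) (k R : ℕ) (hk : 1 ≤ k)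
    (a : ℕ → K) (ha : IsConvergent a) (hR : gaussNorm (tail a) < (q : ℝ) ^ R) (P : K[X])
    (hPa : ∀ i, P.coeff i = a i ∨ P.coeff i = 0)
    (hPk : ∀ b : K, ‖b‖ ≤ 1 → 1 ≤ ‖(k.factorial : K) * (taylor b P).coeff k‖) :
    1 ≤ (q : ℝ) ^ R * ‖(k.factorial : K)‖ ∧ ∀ b : K, ‖b‖ ≤ 1 → ∀ i, 1 ≤ i →
      ‖(taylor b P).coeff (k + i)‖ < (q : ℝ) ^ (R * i) * ‖(taylor b P).coeff k‖ := by
  have hbd : BddAbove (Set.range fun i => ‖tail a i‖) := by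
    obtain ⟨B, hB⟩ := Filter.Tendsto.bddAbove_range ha
    refine ⟨B, ?_⟩
    rintro _ ⟨i, rfl⟩
    have hi : ‖a i‖ ≤ B := hB ⟨i, rfl⟩
    by_cases h0 : i = 0
    · simpa [tail, h0] using (norm_nonneg _).trans hi
    · simpa [tail, h0] using hi
  have hM : ∀ i, ‖tail a i‖ ≤ gaussNorm (tail a) := fun i => le_ciSup hbd i
  have hM0 : 0 ≤ gaussNorm (tail a) := (norm_nonneg _).trans (hM 0)
  have hPM : ∀ j, 1 ≤ j → ‖P.coeff j‖ ≤ gaussNorm (tail a) := by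
    intro j hj
    have := hM j
    have hj0 : j ≠ 0 := by omega
    simp only [tail, hj0, if_false] at this
    rcases hPa j with h1 | h1
    · rw [h1]; exact this
    · rw [h1, norm_zero]; exact hM0
  have hT : ∀ b : K, ‖b‖ ≤ 1 → ∀ j, 1 ≤ j → ‖(taylor b P).coeff j‖ ≤ gaussNorm (tail a) :=
    fun b hb j hj => h.taylor_le P hM0 1 hPM hb j hj
  refine ⟨?_, fun b hb i hi => ?_⟩
  · have h1 := hPk 0 (by simp)
    rw [norm_mul] at h1
    have h2 := hT 0 (by simp) k hk
    have : ‖(k.factorial : K)‖ * ‖(taylor 0 P).coeff k‖ ≤ ‖(k.factorial : K)‖ * (q : ℝ) ^ R :=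
      mul_le_mul_of_nonneg_left (h2.trans hR.le) (norm_nonneg _)
    linarith
  · have h1 : 1 ≤ ‖(taylor b P).coeff k‖ := (hPk b hb).trans (h.nat_mul_le _ _)
    have h2 : (q : ℝ) ^ R ≤ (q : ℝ) ^ (R * i) :=
      pow_le_pow_right₀ h.q1.le (Nat.le_mul_of_pos_right _ hi)
    have h3 := hT b hb (k + i) (by omega)
    have h4 : (q : ℝ) ^ (R * i) * 1 ≤ (q : ℝ) ^ (R * i) * ‖(taylor b P).coeff k‖ :=
      mul_le_mul_of_nonneg_left h1 (pow_nonneg h.qpos.le _)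
    linarith

lemma taylor_deriv_coeff (P : K[X]) (b : K) (n j : ℕ) :
    (taylor b (derivative^[n] P)).coeff j
      = (n.factorial : K) * (((j + n).choose j : ℕ) : K) * (taylor b P).coeff (j + n) := by
  rw [taylor_coeff, taylor_coeff, ← factorial_smul_hasseDeriv]
  have h2 := LinearMap.congr_fun (hasseDeriv_comp (R := K) j n) P
  simp only [LinearMap.comp_apply, LinearMap.smul_apply] at h2
  rw [LinearMap.smul_apply, map_nsmul, h2]
  simp [mul_assoc]

lemma LF.hP_sp {q : ℕ} {ϖ : K} {T : Finset K} (h : LF K q ϖ T) [CharZero K] [CompleteSpace K]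
    {p e : ℕ} (hp : IsResidueData K q p e) (k r R : ℕ) (hk : 1 ≤ k)
    (hR : R = r + e * (k + 1) + e * (k * k))
    (a : ℕ → K) (ha : IsConvergent a) (hr : SPAt q (dcoeff^[k - 1] a) r) (P : K[X]) (ε : ℝ)
    (hε : 0 < ε) (hε1 : ε < 1) (haP : ∀ i, ‖a i - P.coeff i‖ ≤ ε)
    (hPk : ∀ b : K, ‖b‖ ≤ 1 → 1 ≤ ‖(k.factorial : K) * (taylor b P).coeff k‖) :
    1 ≤ (q : ℝ) ^ R * ‖(k.factorial : K)‖ ∧ ∀ b : K, ‖b‖ ≤ 1 → ∀ i, 1 ≤ i →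
      ‖(taylor b P).coeff (k + i)‖ < (q : ℝ) ^ (R * i) * ‖(taylor b P).coeff k‖ := by
  have hq := h.qpos
  obtain ⟨n, rfl⟩ : ∃ n, k = n + 1 := ⟨k - 1, by omega⟩
  rw [Nat.add_sub_cancel] at hr
  refine ⟨?_, fun b hb i hi => ?_⟩
  · refine (h.nat_lower hp (n + 1).factorial ((n + 1) * (n + 1)) (Nat.factorial_pos _) ?_).trans ?_
    · rw [pow_mul]
      exact (Nat.factorial_le_pow _).trans (Nat.pow_le_pow_left Nat.lt_two_pow_self.le _)
    · exact mul_le_mul_of_nonneg_right (pow_le_pow_right₀ h.q1.le (by omega)) (norm_nonneg _)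
  · set V := derivative^[n] P with hV
    set S : ℕ → K := fun j =>
      ∑' m : ℕ, ((m + j).choose j : K) * (dcoeff^[n] a) (m + j) * b ^ m with hS
    have hSV : ∀ j, ‖S j - (taylor b V).coeff j‖ ≤ ε := fun j =>
      h.shift_sub (h.conv_dcoeff ha n) V hε.le (h.dcoeff_sub haP n) hb j
    have hw0 : ϖ ^ r ≠ 0 := pow_ne_zero _ h.unif_ne
    have hwn : ‖ϖ ^ r‖ = (q : ℝ)⁻¹ ^ r := by rw [norm_pow, h.unif]
    obtain ⟨-, hsp⟩ := hr b (ϖ ^ r) hb hw0 hwn.le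
    have h1 := hsp (i + 1) (by omega)
    have e1 : shiftCoeff (dcoeff^[n] a) b (ϖ ^ r) 1 = S 1 := by
      simp only [shiftCoeff, hS, pow_one, inv_mul_cancel₀ hw0, one_mul]
    have e2 : shiftCoeff (dcoeff^[n] a) b (ϖ ^ r) (i + 1) = (ϖ ^ r) ^ i * S (i + 1) := by
      simp only [shiftCoeff, hS]
      rw [pow_succ (ϖ ^ r) i, mul_comm _ (ϖ ^ r), inv_mul_cancel_left₀ hw0]
    rw [e1, e2, norm_mul, norm_pow, hwn] at h1
    -- first coefficient
    have v1 : (taylor b V).coeff 1 = ((n + 1).factorial : K) * (taylor b P).coeff (n + 1) := by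
      rw [hV, taylor_deriv_coeff, Nat.choose_one_right, add_comm 1 n, Nat.factorial_succ]
      push_cast
      ring
    have v1n : 1 ≤ ‖(taylor b V).coeff 1‖ := by rw [v1]; exact hPk b hb
    have s1 : ‖S 1‖ = ‖(taylor b V).coeff 1‖ :=
      h.norm_eq_of_sub_lt (((hSV 1).trans_lt hε1).trans_le v1n)
    set w : ℝ := ((q : ℝ)⁻¹ ^ r) ^ i with hw
    have hwpos : 0 < w := by positivity
    have hwle : w ≤ 1 := by
      rw [hw]
      exact pow_le_one₀ (by positivity)
        (pow_le_one₀ (by positivity) (inv_le_one_of_one_le₀ h.q1.le))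
    have h2 : w * ‖(taylor b V).coeff (i + 1)‖ < ‖(taylor b V).coeff 1‖ := by
      have e3 : (taylor b V).coeff (i + 1) = S (i + 1) - (S (i + 1) - (taylor b V).coeff (i + 1)) := by
        ring
      have h3 : ‖(taylor b V).coeff (i + 1)‖ ≤ max ‖S (i + 1)‖ ε := by
        rw [e3]
        exact h.sub_le (le_max_left _ _) ((hSV _).trans (le_max_right _ _))
      rcases le_max_iff.1 h3 with h4 | h4
      · exact (mul_le_mul_of_nonneg_left h4 hwpos.le).trans_lt (s1 ▸ h1)
      · calc w * ‖(taylor b V).coeff (i + 1)‖ ≤ 1 * ‖(taylor b V).coeff (i + 1)‖ :=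
              mul_le_mul_of_nonneg_right hwle (norm_nonneg _)
          _ ≤ ε := by rw [one_mul]; exact h4
          _ < _ := hε1.trans_le v1n
    rw [v1, hV, taylor_deriv_coeff, Nat.factorial_succ, norm_mul, norm_mul, norm_mul] at h2
    have idx : i + 1 + n = n + 1 + i := by omega
    rw [idx] at h2
    have hn0 : 0 < ‖(n.factorial : K)‖ := by
      rw [norm_pos_iff]; exact_mod_cast Nat.factorial_ne_zero n
    set C : ℕ := (n + 1 + i).choose (i + 1) with hC
    set X := ‖(taylor b P).coeff (n + 1 + i)‖ with hX
    set Y := ‖(taylor b P).coeff (n + 1)‖ with hY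
    have hX0 : 0 ≤ X := norm_nonneg _
    have h5 : w * (‖(C : K)‖ * X) < Y := by
      have e4 : ‖(((n + 1) * n.factorial : ℕ) : K)‖ = ‖((n + 1 : ℕ) : K)‖ * ‖(n.factorial : K)‖ := by
        rw [Nat.cast_mul, norm_mul]
      rw [e4] at h2
      have h6 : ‖((n + 1 : ℕ) : K)‖ * Y ≤ Y := by
        have := mul_le_mul_of_nonneg_right (h.nat_le (n + 1)) (norm_nonneg ((taylor b P).coeff (n + 1)))
        rwa [one_mul] at this
      have h7 : ‖(n.factorial : K)‖ * (w * (‖(C : K)‖ * X)) < ‖(n.factorial : K)‖ * Y := by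
        have := mul_le_mul_of_nonneg_left h6 hn0.le
        nlinarith
      exact lt_of_mul_lt_mul_left h7 hn0.le
    have h8 := h.nat_lower hp C (n + 1 + i) (Nat.choose_pos (by omega)) (Nat.choose_le_two_pow _ _)
    set Q1 := (q : ℝ) ^ (e * (n + 1 + i)) with hQ1
    have hQ1p : 0 < Q1 := by positivity
    have hwq : (q : ℝ) ^ (r * i) * w = 1 := by
      rw [hw, ← pow_mul, inv_pow, mul_inv_cancel₀ (by positivity)]
    have hY0 : 0 < Y := lt_of_le_of_lt (by positivity) h5
    calc X = (q : ℝ) ^ (r * i) * w * X := by rw [hwq, one_mul]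
      _ ≤ (q : ℝ) ^ (r * i) * w * (Q1 * ‖(C : K)‖ * X) := by
          refine mul_le_mul_of_nonneg_left ?_ (by positivity)
          exact le_mul_of_one_le_left hX0 h8
      _ = (q : ℝ) ^ (r * i) * Q1 * (w * (‖(C : K)‖ * X)) := by ring
      _ < (q : ℝ) ^ (r * i) * Q1 * Y := mul_lt_mul_of_pos_left h5 (by positivity)
      _ ≤ (q : ℝ) ^ (R * i) * Y := by
          refine mul_le_mul_of_nonneg_right ?_ hY0.le
          rw [hQ1, ← pow_add]
          refine pow_le_pow_right₀ h.q1.le ?_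
          rw [hR]
          have : n + 1 + i ≤ (n + 1 + 1) * i := by nlinarith
          have h9 := Nat.mul_le_mul_left e this
          have : (r + e * (n + 1 + 1) + e * ((n + 1) * (n + 1))) * i
            = r * i + e * ((n + 1 + 1) * i) + e * ((n + 1) * (n + 1)) * i := by ring
          rw [this]
          omega

end VdCProof

open VdC in
/-- Proposition 3.2: the analytic non-archimedean van der Corput
Lemma.  Suppose `f ∈ K⦃x⦄` satisfies `|f^{(k)}(x)| ≥ 1` on `O_K` for some `k ≥ 1`.
Then `|∫_{O_K} ψ(y f(t)) dt| ≤ c_k |y|^{-1/k}` for all `y ∈ K^×`, where `c_k` depends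
only on `k`, `q_K` and the Gauss norm `‖f - f(0)‖`; alternatively, if `K` has
characteristic zero, `c_k` can be taken to depend only on `k`, `q_K`, the ramification
degree `ord(p_K)` and the SP-number of `f^{(k-1)}`. -/
theorem statement7 (k q : ℕ) (hk : 1 ≤ k) (hq : 1 < q) :
    (∃ c : ℝ → ℝ,
      ∀ (K : Type) [NontriviallyNormedField K] [MeasurableSpace K]
        (μ : Measure K), μ.IsAddHaarMeasure → μ {x : K | ‖x‖ ≤ 1} = 1 →
        IsLocalField K q → ∀ ψ : K → ℂ, IsAddChar ψ →
        ∀ a : ℕ → K, IsConvergent a →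
          (∀ x : K, ‖x‖ ≤ 1 → 1 ≤ ‖pseval (dcoeff^[k] a) x‖) →
          ∀ y : K, y ≠ 0 →
            ‖∫ x in {x : K | ‖x‖ ≤ 1}, ψ (y * pseval a x) ∂μ‖
              ≤ c (gaussNorm (tail a)) * ‖y‖ ^ (-(1 : ℝ) / k)) ∧
    (∃ c : ℕ → ℕ → ℝ,
      ∀ (K : Type) [NontriviallyNormedField K] [CharZero K] [MeasurableSpace K]
        (μ : Measure K), μ.IsAddHaarMeasure → μ {x : K | ‖x‖ ≤ 1} = 1 →
        IsLocalField K q → ∀ p e : ℕ, IsResidueData K q p e →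
        ∀ ψ : K → ℂ, IsAddChar ψ →
        ∀ a : ℕ → K, IsConvergent a →
          (∀ x : K, ‖x‖ ≤ 1 → 1 ≤ ‖pseval (dcoeff^[k] a) x‖) →
          ∀ r : ℕ, IsLeast {r' : ℕ | SPAt q (dcoeff^[k - 1] a) r'} r →
          ∀ y : K, y ≠ 0 →
            ‖∫ x in {x : K | ‖x‖ ≤ 1}, ψ (y * pseval a x) ∂μ‖
              ≤ c e r * ‖y‖ ^ (-(1 : ℝ) / k)) := by
  refine ⟨?_, ?_⟩
  · have hq1 : (1 : ℝ) < q := by exact_mod_cast hq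
    choose R hR using fun M : ℝ => pow_unbounded_of_one_lt M hq1
    refine ⟨fun M => k * (q : ℝ) ^ (3 * R M + 1), ?_⟩
    intro K _ _ μ hμ h1 hK ψ hψ a ha hder y hy
    haveI := hK.complete
    obtain ⟨ϖ, T, h⟩ := VdCProof.exists_LF hK
    exact h.final μ hμ h1 hψ k _ hk a ha hder
      (fun P ε _ _ _ hPa hPk => h.hP_gauss k _ hk a ha (hR _) P hPa hPk) y hy
  · refine ⟨fun e r => k * (q : ℝ) ^ (3 * (r + e * (k + 1) + e * (k * k)) + 1), ?_⟩
    intro K _ _ _ μ hμ h1 hK p e hp ψ hψ a ha hder r hr y hy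
    haveI := hK.complete
    obtain ⟨ϖ, T, h⟩ := VdCProof.exists_LF hK
    exact h.final μ hμ h1 hψ k _ hk a ha hder
      (fun P ε hε hε1 haP _ hPk => h.hP_sp hp k r _ hk rfl a ha hr.1 P ε hε hε1 haP hPk) y hy
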